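/- arXiv:1705.02993 — 5 statements merged into one kernel-verified Lean document; each statement's English description precedes it below -/
import Mathlib

section
/- Fix an integer k ≥ 1. There exists a constant C > 0 such that for every prime p and every nonidentity element ω of the free group F_k on k generators, of word length l, the following holds: if there exists a tuple (h₁, …, h_k) ∈ PGL₂(ℤ/pℤ)^k with ω(h₁, …, h_k) ≠ 1, then the proportion of tuples (g₁, …, g_k) ∈ PGL₂(ℤ/pℤ)^k (with respect to the uniform measure) satisfying ω(g₁, …, g_k) = 1 is at most l/p + C/p². -/
open MeasureTheory

noncomputable section

abbrev SL (n p : ℕ) := Matrix.SpecialLinearGroup (Fin n) (ZMod p)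

/-- Density of the Kesten–McKay law with parameter `2d`. -/
noncomputable def kmDensity (d : ℕ) (x : ℝ) : ℝ :=
  if x ^ 2 ≤ 4 * (2 * (d : ℝ) - 1) then
    2 * d * Real.sqrt (4 * (2 * (d : ℝ) - 1) - x ^ 2) /
      (2 * Real.pi * ((2 * (d : ℝ)) ^ 2 - x ^ 2))
  else 0

/-- The Kesten–McKay law with parameter `2d`, as a measure on `ℝ`. -/
noncomputable def kestenMcKay (d : ℕ) : Measure ℝ :=
  MeasureTheory.volume.withDensity fun x => ENNReal.ofReal (kmDensity d x)

/-- Discrepancy between two measures on ℝ. -/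
noncomputable def discrepancy (ν μ : Measure ℝ) : ℝ :=
  sSup {r : ℝ | ∃ a b : ℝ, a ≤ b ∧
    r = |(ν (Set.Icc a b)).toReal - (μ (Set.Icc a b)).toReal|}

/-- The element of the free group on `d` generators given by a word of length `m`. -/
def wordProd {d m : ℕ} (w : Fin m → Fin d × Bool) : FreeGroup (Fin d) :=
  (List.ofFn fun j => if (w j).2 then FreeGroup.of (w j).1 else (FreeGroup.of (w j).1)⁻¹).prod

/-- Evaluation of a word of length `m` in `d` letters at a tuple `S`. -/
def wordEval {G : Type*} [Group G] {d m : ℕ} (S : Fin d → G) (w : Fin m → Fin d × Bool) : G :=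
  (List.ofFn fun j => if (w j).2 then S (w j).1 else (S (w j).1)⁻¹).prod

/-- `N(d,m)`: the number of trivial words of length `m` in `d` letters. -/
noncomputable def Ntriv (d m : ℕ) : ℕ :=
  Nat.card {w : Fin m → Fin d × Bool // wordProd w = 1}

/-- `A_{π,S} = Σᵢ (π gᵢ + (π gᵢ)⁻¹)`. -/
noncomputable def Amat {G : Type*} [Group G] {n d : ℕ}
    (π : G →* Matrix.unitaryGroup (Fin n) ℂ) (S : Fin d → G) : Matrix (Fin n) (Fin n) ℂ :=
  ∑ i, ((π (S i) : Matrix (Fin n) (Fin n) ℂ) + ((π (S i))⁻¹ : Matrix (Fin n) (Fin n) ℂ))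

/-- Spectral probability measure of a Hermitian matrix. -/
noncomputable def specMeasure {n : ℕ} (A : Matrix (Fin n) (Fin n) ℂ) : Measure ℝ := by
  classical
  exact if hA : A.IsHermitian then
    (n : ENNReal)⁻¹ • ∑ j : Fin n, Measure.dirac (hA.eigenvalues j) else 0

/-- A unitary representation is irreducible if the only invariant subspaces are `⊥` and `⊤`. -/
def IsIrreducibleRep {G : Type*} [Group G] {n : ℕ}
    (π : G →* Matrix.unitaryGroup (Fin n) ℂ) : Prop :=
  ∀ W : Submodule ℂ (Fin n → ℂ),
    (∀ g : G, ∀ v ∈ W, (π g : Matrix (Fin n) (Fin n) ℂ).mulVec v ∈ W) → W = ⊥ ∨ W = ⊤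

/-- Number of eigenvalues of a Hermitian matrix with `|λ| > t`, with multiplicity. -/
noncomputable def excCount {n : ℕ} (A : Matrix (Fin n) (Fin n) ℂ) (t : ℝ) : ℕ := by
  classical
  exact if hA : A.IsHermitian then
    (Finset.univ.filter fun j : Fin n => t < |hA.eigenvalues j|).card else 0

end

/-- PGL₂(ℤ/pℤ): the quotient of GL₂(ℤ/pℤ) by its center. -/
abbrev PGL2 (p : ℕ) :=
  Matrix.GeneralLinearGroup (Fin 2) (ZMod p) ⧸
    Subgroup.center (Matrix.GeneralLinearGroup (Fin 2) (ZMod p))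

/-!
Replace the coordinates of a tuple on which `ω` is nontrivial by random ones, one coordinate at a
time; the probability that `ω` becomes trivial at the `i`-th replacement has to be bounded. When
all other coordinates are fixed, triviality of `ω` in the projective group says that the matrix
value of `ω` commutes with every invertible matrix. If it does not do so yet, some entry of a
commutator is a nonzero polynomial in the entries of the `i`-th matrix, and with inverses replaced
by adjugates it is homogeneous, of degree at most `n - 1` times the number of occurrences of the
`i`-th letter in `ω`. By Serre's inequality a nonzero form of degree `d` vanishes on a proportion
at most `d / q + O(1 / q²)` of all matrices; for `d < q` the same holds among the invertible ones,
whose density is at least `1 - 1 / q - 1 / q²`. Summing over the coordinates adds the occurrences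
up to the length of `ω`.
-/

open Function hiding eval
open MvPolynomial
open scoped MatrixGroups

section Proportion

variable {α β : Type*}

/-- The probability that a uniformly random element of the finite type `α` satisfies `P`; it is `0`
when `α` is empty. -/
noncomputable def proportion (P : α → Prop) : ℝ :=
  Nat.card {a // P a} / Nat.card α

lemma proportion_nonneg (P : α → Prop) : 0 ≤ proportion P := by
  unfold proportion
  positivity

lemma proportion_le_one [Finite α] (P : α → Prop) : proportion P ≤ 1 :=
  div_le_one_of_le₀ (by exact_mod_cast Finite.card_subtype_le P) (Nat.cast_nonneg _)

lemma proportion_eq_zero {P : α → Prop} (h : ∀ a, ¬ P a) : proportion P = 0 := by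
  have : IsEmpty {a // P a} := ⟨fun a => h a a.2⟩
  simp [proportion]

lemma proportion_mono [Finite α] {P Q : α → Prop} (h : ∀ a, P a → Q a) :
    proportion P ≤ proportion Q := by
  have hcard : Nat.card {a // P a} ≤ Nat.card {a // Q a} :=
    Nat.card_le_card_of_injective (Subtype.map id h) (Subtype.map_injective h injective_id)
  unfold proportion
  gcongr

lemma proportion_congr (e : α ≃ β) {P : α → Prop} {Q : β → Prop} (h : ∀ a, P a ↔ Q (e a)) :
    proportion P = proportion Q := by
  rw [proportion, proportion, Nat.card_congr e, Nat.card_congr (e.subtypeEquiv h)]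

lemma proportion_comp_of_surjective {G H : Type*} [Group G] [Group H] [Finite G] {f : G →* H}
    (hf : Surjective f) (P : H → Prop) : proportion (fun g => P (f g)) = proportion P := by
  have : Finite H := Finite.of_surjective f hf
  have card_comp (Q : H → Prop) :
      Nat.card {g // Q (f g)} = Nat.card {h // Q h} * Nat.card f.ker := by
    rw [← Nat.card_prod]
    exact Nat.card_congr <| calc
      {g // Q (f g)} ≃ Σ h : {h // Q h}, {g // f g = h} :=
        (Equiv.sigmaSubtypeFiberEquivSubtype f fun _ => Iff.rfl).symm
      _ ≃ Σ _ : {h // Q h}, f.ker :=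
        Equiv.sigmaCongrRight fun h => f.fiberEquivKerOfSurjective hf h
      _ ≃ {h // Q h} × f.ker := Equiv.sigmaEquivProd _ _
  have card_domain : Nat.card G = Nat.card H * Nat.card f.ker := by
    simpa using card_comp fun _ => True
  have card_ker_ne_zero : (Nat.card f.ker : ℝ) ≠ 0 := by exact_mod_cast Nat.card_pos.ne'
  rw [proportion, proportion, card_comp, card_domain, Nat.cast_mul, Nat.cast_mul,
    mul_div_mul_right _ _ card_ker_ne_zero]

lemma natCard_isUnit (M : Type*) [Monoid M] : Nat.card {a : M // IsUnit a} = Nat.card Mˣ :=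
  Nat.card_congr Submonoid.unitsTypeEquivIsUnitSubmonoid.symm.toEquiv

lemma proportion_units_mul_proportion_isUnit_le {M : Type*} [Monoid M] [Finite M] (P : M → Prop) :
    proportion (fun u : Mˣ => P u) * proportion (IsUnit : M → Prop) ≤ proportion P := by
  have card_units : Nat.card {u : Mˣ // P u} ≤ Nat.card {a // P a} :=
    Nat.card_le_card_of_injective (Subtype.map Units.val fun _ => id)
      (Subtype.map_injective _ Units.val_injective)
  have card_ne_zero : (Nat.card Mˣ : ℝ) ≠ 0 := by exact_mod_cast Nat.card_pos.ne'
  rw [proportion, proportion, proportion, natCard_isUnit, div_mul_div_cancel₀ card_ne_zero]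
  gcongr

lemma proportion_prod [Fintype α] [Finite β] (P : α × β → Prop) :
    proportion P = (∑ a, proportion fun b => P (a, b)) / Nat.card α := by
  have card_eq : Nat.card {x // P x} = ∑ a, Nat.card {b // P (a, b)} := by
    rw [← Nat.card_sigma]
    exact Nat.card_congr (Equiv.subtypeProdEquivSigmaSubtype fun a b => P (a, b))
  simp only [proportion]
  rw [← Finset.sum_div, div_div, card_eq, Nat.card_prod, Nat.cast_sum, Nat.cast_mul, mul_comm]

lemma proportion_prod_le [Finite α] [Nonempty α] [Finite β] {P : α × β → Prop} {A : α → Prop}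
    {c : ℝ} (h : ∀ a, ¬ A a → proportion (fun b => P (a, b)) ≤ c) :
    proportion P ≤ proportion A + (1 - proportion A) * c := by
  classical
  cases nonempty_fintype α
  have card_pos : (0 : ℝ) < Nat.card α := by exact_mod_cast Nat.card_pos
  have sum_indicator : ∑ a, (if A a then (1 : ℝ) else 0) = Nat.card {a // A a} := by
    rw [Finset.sum_boole, Nat.card_eq_fintype_card, Fintype.card_subtype]
  have fiber_le (a : α) : proportion (fun b => P (a, b)) ≤
      (if A a then 1 else 0) * (1 - c) + c := by
    split_ifs with ha
    · linarith [proportion_le_one fun b => P (a, b)]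
    · linarith [h a ha]
  rw [proportion_prod, div_le_iff₀ card_pos]
  calc ∑ a, proportion (fun b => P (a, b))
      ≤ ∑ a, ((if A a then 1 else 0) * (1 - c) + c) := Finset.sum_le_sum fun a _ => fiber_le a
    _ = Nat.card {a // A a} * (1 - c) + Nat.card α * c := by
        rw [Finset.sum_add_distrib, ← Finset.sum_mul, sum_indicator, Finset.sum_const,
          nsmul_eq_mul, Finset.card_univ, ← Nat.card_eq_fintype_card]
    _ = (proportion A + (1 - proportion A) * c) * Nat.card α := by
        unfold proportion
        field_simp
        ring

lemma proportion_prod_fst [Finite α] [Nonempty β] [Finite β] (P : α → Prop) :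
    proportion (fun x : α × β => P x.1) = proportion P := by
  have card_ne_zero : (Nat.card β : ℝ) ≠ 0 := by exact_mod_cast Nat.card_pos.ne'
  rw [proportion, proportion, Nat.card_prod, Nat.cast_mul,
    Nat.card_congr (Equiv.prodSubtypeFstEquivSubtypeProd (p := P)), Nat.card_prod, Nat.cast_mul,
    mul_div_mul_right _ _ card_ne_zero]

variable {ι : Type*} [DecidableEq ι]

lemma proportion_le_of_update [Finite ι] [Finite β] [Nonempty β] (i : ι) {P A : (ι → β) → Prop}
    {c : ℝ} (h : ∀ g, ¬ A g → proportion (fun x => P (update g i x)) ≤ c) :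
    proportion P ≤ proportion A + (1 - proportion A) * c := by
  let resample : (ι → β) × β ≃ (ι → β) × β :=
    Involutive.toPerm (fun x => (update x.1 i x.2, x.1 i)) fun x => by simp
  calc proportion P = proportion fun x : (ι → β) × β => P x.1 := (proportion_prod_fst P).symm
    _ = proportion fun x : (ι → β) × β => P (update x.1 i x.2) :=
        (proportion_congr resample fun _ => Iff.rfl).symm
    _ ≤ proportion A + (1 - proportion A) * c := proportion_prod_le h

theorem proportion_le_sum_of_update [Fintype ι] [Finite β] {P : (ι → β) → Prop} {c : ι → ℝ}
    (hc : ∀ i, 0 ≤ c i)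
    (h : ∀ i g, ¬ P g → proportion (fun x => P (update g i x)) ≤ c i)
    {g₀ : ι → β} (hg₀ : ¬ P g₀) : proportion P ≤ ∑ i, c i := by
  suffices hybrid : ∀ s : Finset ι, proportion (fun g => P (s.piecewise g g₀)) ≤ ∑ i ∈ s, c i by
    simpa using hybrid Finset.univ
  intro s
  induction s using Finset.induction_on with
  | empty => simp [proportion_eq_zero, hg₀]
  | insert i s hi ih =>
    have : Nonempty β := ⟨g₀ i⟩
    set A : (ι → β) → Prop := fun g => P (s.piecewise g g₀)
    have piecewise_update (g : ι → β) (x : β) :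
        (insert i s).piecewise (update g i x) g₀ = update (s.piecewise g g₀) i x := by
      rw [Finset.piecewise_insert, update_self]
      ext j
      obtain rfl | hj := eq_or_ne j i
      · simp
      · simp [Finset.piecewise, hj]
    have step : proportion (fun g => P ((insert i s).piecewise g g₀)) ≤
        proportion A + (1 - proportion A) * c i :=
      proportion_le_of_update i fun g hg => by
        simpa only [piecewise_update] using h i _ hg
    rw [Finset.sum_insert hi]
    nlinarith [mul_nonneg (proportion_nonneg A) (hc i)]

end Proportion

section SerreBound

lemma exists_linearEquiv_apply_eq {K V : Type*} [Field K] [AddCommGroup V] [Module K V] {v w : V}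
    (hv : v ≠ 0) (hw : w ≠ 0) : ∃ g : V ≃ₗ[K] V, g v = w := by
  let e := LinearEquiv.toSpanNonzeroSingleton K V v hv
  let e' := LinearEquiv.toSpanNonzeroSingleton K V w hw
  obtain ⟨g, hg⟩ := Submodule.exists_linearEquiv_restrict_eq (e.symm.trans e')
  refine ⟨g, ?_⟩
  have apply_generator := hg (e 1)
  rw [LinearEquiv.trans_apply, LinearEquiv.symm_apply_apply] at apply_generator
  simpa [e, e'] using apply_generator.symm

lemma proportion_eval_polynomial_eq_zero_le {K : Type*} [Field K] [Finite K] {f : Polynomial K}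
    (hf : f ≠ 0) : proportion (fun x => f.eval x = 0) ≤ f.natDegree / Nat.card K := by
  classical
  have card_le : Nat.card {x // f.eval x = 0} ≤ f.natDegree := by
    have roots_eq (x : K) : f.eval x = 0 ↔ x ∈ f.roots.toFinset := by simp [hf]
    simp only [roots_eq, Nat.card_eq_fintype_card, Fintype.card_coe]
    exact (Multiset.toFinset_card_le _).trans f.card_roots'
  unfold proportion
  gcongr

variable {σ R : Type*} [CommSemiring R]

lemma single_apply_eq_of_degree_le {m : σ →₀ ℕ} {i : σ} (h : m.degree ≤ m i) :
    Finsupp.single i (m i) = m := by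
  have degree_split : m i + (m.erase i).degree = m.degree := by
    rw [← Finsupp.degree_single i (m i), ← map_add, Finsupp.single_add_erase]
  have erase_eq_zero : m.erase i = 0 := (Finsupp.degree_eq_zero_iff _).1 (by omega)
  rw [← add_zero (Finsupp.single i (m i)), ← erase_eq_zero, Finsupp.single_add_erase]

lemma eval_single_one_of_isHomogeneous [DecidableEq σ] {F : MvPolynomial σ R} {d : ℕ}
    (hF : F.IsHomogeneous d) (i : σ) :
    eval (Pi.single i 1) F = coeff (Finsupp.single i d) F := by
  rw [eval_eq, Finset.sum_eq_single (Finsupp.single i d)]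
  · rw [Finset.prod_eq_one, mul_one]
    intro j hj
    rw [Finset.mem_singleton.1 (Finsupp.support_single_subset hj), Pi.single_eq_same, one_pow]
  · intro m hm hmi
    have degree_eq : m.degree = d :=
      by_contra fun h => mem_support_iff.1 hm (hF.coeff_eq_zero h)
    obtain ⟨j, hj, hji⟩ : ∃ j ∈ m.support, j ≠ i := by
      by_contra! hsupp
      have hm_single : m = Finsupp.single i (m i) :=
        Finsupp.support_subset_singleton.1 fun j hj => Finset.mem_singleton.2 (hsupp j hj)
      rw [hm_single, Finsupp.degree_single] at degree_eq
      exact hmi (degree_eq ▸ hm_single)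
    rw [Finset.prod_eq_zero hj, mul_zero]
    rw [Pi.single_eq_of_ne hji, zero_pow (Finsupp.mem_support_iff.1 hj)]
  · intro h
    rw [notMem_support_iff.1 h, zero_mul]

lemma degreeOf_lt_of_eval_single_one_eq_zero [DecidableEq σ] {F : MvPolynomial σ R} {d : ℕ}
    (hF : F.IsHomogeneous d) (hF0 : F ≠ 0) {i : σ} (hi : eval (Pi.single i 1) F = 0) :
    F.degreeOf i < d := by
  rw [eval_single_one_of_isHomogeneous hF] at hi
  by_contra! hd
  obtain ⟨m, hm, hmi⟩ := Finset.exists_mem_eq_sup F.support (support_nonempty.2 hF0) fun m => m i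
  have degree_eq : m.degree = d :=
    by_contra fun h => mem_support_iff.1 hm (hF.coeff_eq_zero h)
  rw [degreeOf_eq_sup, hmi] at hd
  have apply_eq : m i = d := ((Finsupp.le_degree i m).trans_eq degree_eq).antisymm hd
  rw [← apply_eq, single_apply_eq_of_degree_le (degree_eq.trans_le apply_eq.ge)] at hi
  exact mem_support_iff.1 hm hi

variable {K : Type*} [Field K]

lemma exists_isHomogeneous_eval_comp_linearEquiv {σ : Type*} [Finite σ] {F : MvPolynomial σ K}
    {d : ℕ} (hF : F.IsHomogeneous d) (hF0 : F ≠ 0) (g : (σ → K) ≃ₗ[K] (σ → K)) :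
    ∃ G : MvPolynomial σ K, G.IsHomogeneous d ∧ G ≠ 0 ∧ ∀ x, eval x G = eval (g x) F := by
  classical
  cases nonempty_fintype σ
  let A := LinearMap.toMatrix' g.toLinearMap
  let B := LinearMap.toMatrix' g.symm.toLinearMap
  have mul_eq_one : A * B = 1 := by
    rw [← LinearMap.toMatrix'_comp, LinearEquiv.comp_symm, LinearMap.toMatrix'_id]
  refine ⟨bind₁ A.toMvPolynomial F, ?_, fun hzero => hF0 ?_, fun x => ?_⟩
  · simpa using hF.aeval A.toMvPolynomial A.toMvPolynomial_isHomogeneous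
  · have substitute_inverse : bind₁ B.toMvPolynomial (bind₁ A.toMvPolynomial F) = F := by
      simp only [bind₁_bind₁, ← Matrix.toMvPolynomial_mul, mul_eq_one, Matrix.toMvPolynomial_one,
        bind₁_X_left, AlgHom.id_apply]
    rw [← substitute_inverse, hzero, map_zero]
  · have eval_substitution : (fun i => eval x (A.toMvPolynomial i)) = g x := by
      ext i
      rw [Matrix.toMvPolynomial_eval_eq_apply, LinearMap.toMatrix'_mulVec]
      rfl
    rw [← eval_substitution]
    exact eval₂Hom_bind₁ _ _ _ _

variable [Finite K]

lemma proportion_eval_eq_zero_le_leadingCoeff {n : ℕ} {F : MvPolynomial (Fin (n + 1)) K} :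
    proportion (fun x => eval x F = 0) ≤
      proportion (fun y => eval y (finSuccEquiv K n F).leadingCoeff = 0) +
        (1 - proportion fun y => eval y (finSuccEquiv K n F).leadingCoeff = 0) *
          (F.degreeOf 0 / Nat.card K) := by
  set f := finSuccEquiv K n F
  have fiber_le (y : Fin n → K) (hy : ¬ eval y f.leadingCoeff = 0) :
      proportion (fun t => eval (Fin.cons t y : Fin (n + 1) → K) F = 0) ≤
        F.degreeOf 0 / Nat.card K := by
    have map_ne_zero : f.map (eval y) ≠ 0 := fun h => hy <| by
      rw [Polynomial.leadingCoeff, ← Polynomial.coeff_map, h, Polynomial.coeff_zero]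
    simp only [eval_eq_eval_mv_eval']
    refine (proportion_eval_polynomial_eq_zero_le map_ne_zero).trans ?_
    rw [← natDegree_finSuccEquiv]
    gcongr
    exact Polynomial.natDegree_map_le
  rw [← proportion_congr ((Equiv.prodComm _ _).trans (Fin.consEquiv fun _ => K)) fun _ => Iff.rfl]
  exact proportion_prod_le fiber_le

lemma proportion_eval_eq_zero_le_one_div {n : ℕ} {F : MvPolynomial (Fin (n + 1)) K}
    (hF : ∀ v ≠ 0, eval v F ≠ 0) : proportion (fun x => eval x F = 0) ≤ 1 / Nat.card K := by
  have one_le_card : (1 : ℝ) ≤ Nat.card K := by exact_mod_cast Nat.card_pos (α := K)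
  calc proportion (fun x => eval x F = 0)
      ≤ proportion (fun x : Fin (n + 1) → K => x = 0) :=
        proportion_mono fun x hx => not_imp_not.1 (hF x) hx
    _ = 1 / (Nat.card K : ℝ) ^ (n + 1) := by simp [proportion, Nat.card_fun]
    _ ≤ 1 / Nat.card K := by
        gcongr
        exact le_self_pow₀ one_le_card n.succ_ne_zero

lemma serre_bound_of_fiberwise_bound {q d e m z w : ℝ} (hq : 1 ≤ q) (he : 0 ≤ e) (hm : 1 ≤ m)
    (heq : e ≤ q) (hd : m + e = d) (hw : w ≤ (1 + m * (q - 1)) / q ^ 2)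
    (hz : z ≤ w + (1 - w) * (e / q)) :
    z ≤ (1 + d * (q - 1)) / q ^ 2 := by
  have e_div_le : e / q ≤ 1 := div_le_one_of_le₀ heq (by linarith)
  calc z ≤ w * (1 - e / q) + e / q := by linarith
    _ ≤ (1 + m * (q - 1)) / q ^ 2 * (1 - e / q) + e / q := by gcongr
    _ = (1 + d * (q - 1)) / q ^ 2 - e * (q - 1) * (m - 1) / q ^ 3 := by
        subst hd
        field_simp
        ring
    _ ≤ (1 + d * (q - 1)) / q ^ 2 := sub_le_self _ <| div_nonneg
        (mul_nonneg (mul_nonneg he (by linarith)) (by linarith)) (by positivity)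

lemma serre_bound_of_eval_single_one_eq_zero {n d : ℕ} {F : MvPolynomial (Fin (n + 1)) K}
    (hF : F.IsHomogeneous d) (hF0 : F ≠ 0) (h : eval (Pi.single 0 1) F = 0) (hd : d ≤ Nat.card K)
    (ih : ∀ {m : ℕ} {G : MvPolynomial (Fin n) K}, G.IsHomogeneous m → G ≠ 0 → 0 < m →
      proportion (fun x => eval x G = 0) ≤ (1 + m * (Nat.card K - 1)) / (Nat.card K : ℝ) ^ 2) :
    proportion (fun x => eval x F = 0) ≤ (1 + d * (Nat.card K - 1)) / (Nat.card K : ℝ) ^ 2 := by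
  have degree_lt : F.degreeOf 0 < d := degreeOf_lt_of_eval_single_one_eq_zero hF hF0 h
  obtain ⟨m, rfl⟩ := Nat.exists_eq_add_of_lt degree_lt
  have leadingCoeff_homogeneous :
      (finSuccEquiv K n F).leadingCoeff.IsHomogeneous (m + 1) :=
    hF.finSuccEquiv_coeff_isHomogeneous _ _ (by rw [natDegree_finSuccEquiv, add_assoc])
  exact serre_bound_of_fiberwise_bound (m := (m + 1 : ℕ)) (e := F.degreeOf 0)
    (by exact_mod_cast Nat.card_pos (α := K)) (by positivity) (by simp)
    (by exact_mod_cast degree_lt.le.trans hd) (by push_cast; ring)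
    (ih leadingCoeff_homogeneous (by simpa using hF0) m.succ_pos)
    proportion_eval_eq_zero_le_leadingCoeff

lemma proportion_eval_eq_zero_le_of_pos_degree {n d : ℕ} {F : MvPolynomial (Fin n) K}
    (hF : F.IsHomogeneous d) (hF0 : F ≠ 0) (hd : 0 < d) :
    proportion (fun x => eval x F = 0) ≤ (1 + d * (Nat.card K - 1)) / (Nat.card K : ℝ) ^ 2 := by
  have one_le_card : (1 : ℝ) ≤ Nat.card K := by exact_mod_cast Nat.card_pos (α := K)
  induction n generalizing d with
  | zero => exact absurd ((isHomogeneous_of_isEmpty _ _ F).inj_right hF hF0) hd.ne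
  | succ n ih =>
    have one_le_d : (1 : ℝ) ≤ d := by exact_mod_cast hd
    obtain hdK | hdK := lt_or_ge (Nat.card K) d
    · have card_add_one_le : (Nat.card K + 1 : ℝ) ≤ d := by exact_mod_cast hdK
      refine (proportion_le_one _).trans ((one_le_div (by positivity)).2 ?_)
      nlinarith
    -- A nontrivial zero moved to the first basis vector kills the coefficient of `X 0 ^ d`, so the
    -- leading coefficient in `X 0` is homogeneous of positive degree.
    by_cases hzero : ∃ v ≠ 0, eval v F = 0
    · obtain ⟨v, hv, hvF⟩ := hzero
      obtain ⟨g, hg⟩ := exists_linearEquiv_apply_eq (K := K)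
        (v := (Pi.single 0 1 : Fin (n + 1) → K)) (by simp) hv
      obtain ⟨G, hG, hG0, hGF⟩ := exists_isHomogeneous_eval_comp_linearEquiv hF hF0 g
      rw [← proportion_congr (P := fun x => eval x G = 0) g.toEquiv fun x => by simp [hGF]]
      exact serre_bound_of_eval_single_one_eq_zero hG hG0 (by rw [hGF, hg, hvF]) hdK ih
    · push Not at hzero
      calc proportion (fun x => eval x F = 0)
          ≤ 1 / Nat.card K := proportion_eval_eq_zero_le_one_div hzero
        _ = (1 + 1 * (Nat.card K - 1)) / (Nat.card K : ℝ) ^ 2 := by field_simp; ring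
        _ ≤ (1 + d * (Nat.card K - 1)) / (Nat.card K : ℝ) ^ 2 := by gcongr

/-- Serre's inequality for projective hypersurfaces, counted on the affine cone (which contains the
origin). -/
theorem proportion_eval_eq_zero_le_of_isHomogeneous {σ : Type*} [Finite σ] {d : ℕ}
    {F : MvPolynomial σ K} (hF : F.IsHomogeneous d) (hF0 : F ≠ 0) :
    proportion (fun x => eval x F = 0) ≤ (1 + d * (Nat.card K - 1)) / (Nat.card K : ℝ) ^ 2 := by
  obtain rfl | hd := d.eq_zero_or_pos
  · rw [← totalDegree_zero_iff_isHomogeneous, totalDegree_eq_zero_iff_eq_C] at hF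
    have coeff_ne_zero : coeff 0 F ≠ 0 := fun h => hF0 <| by rw [hF, h, C_0]
    rw [proportion_eq_zero fun x => by rw [hF, eval_C]; exact coeff_ne_zero]
    simp
  · cases nonempty_fintype σ
    let e := Fintype.equivFin σ
    have reindex : proportion (fun x => eval x F = 0) =
        proportion (fun x => eval x (rename e F) = 0) :=
      proportion_congr (e.arrowCongr (Equiv.refl K)) fun x => by
        simp [eval_rename, Function.comp_def]
    rw [reindex]
    exact proportion_eval_eq_zero_le_of_pos_degree hF.rename_isHomogeneous
      (by simpa using (rename_injective e e.injective).ne hF0) hd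

end SerreBound

section InvertibleMatrices

lemma one_sub_sub_sq_add_pow_le_prod {x : ℝ} (hx0 : 0 ≤ x) (hx1 : x ≤ 1) (n : ℕ) :
    1 - x - x ^ 2 + x ^ (n + 2) ≤ ∏ j ∈ Finset.range (n + 1), (1 - x ^ (j + 1)) := by
  induction n with
  | zero => simp
  | succ n ih =>
    have pow_le : x ^ (2 * n + 4) ≤ x ^ (n + 4) := pow_le_pow_of_le_one hx0 hx1 (by omega)
    rw [Finset.prod_range_succ]
    calc 1 - x - x ^ 2 + x ^ (n + 3)
        ≤ 1 - x - x ^ 2 + x ^ (n + 3) + (x ^ (n + 4) - x ^ (2 * n + 4)) :=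
          le_add_of_nonneg_right (sub_nonneg.2 pow_le)
      _ = (1 - x - x ^ 2 + x ^ (n + 2)) * (1 - x ^ (n + 2)) := by ring
      _ ≤ (∏ j ∈ Finset.range (n + 1), (1 - x ^ (j + 1))) * (1 - x ^ (n + 1 + 1)) := by
          gcongr
          exact sub_nonneg.2 (pow_le_one₀ hx0 hx1)

lemma one_sub_sub_sq_le_prod {x : ℝ} (hx0 : 0 ≤ x) (hx1 : x ≤ 1) (n : ℕ) :
    1 - x - x ^ 2 ≤ ∏ j ∈ Finset.range n, (1 - x ^ (j + 1)) := by
  cases n with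
  | zero => simpa using by linarith [sq_nonneg x]
  | succ n => linarith [one_sub_sub_sq_add_pow_le_prod hx0 hx1 n, pow_nonneg hx0 (n + 2)]

lemma proportion_isUnit_matrix (K : Type*) [Field K] [Finite K] (n : ℕ) :
    proportion (IsUnit : Matrix (Fin n) (Fin n) K → Prop) =
      ∏ j ∈ Finset.range n, (1 - (1 / Nat.card K : ℝ) ^ (j + 1)) := by
  cases nonempty_fintype K
  set q := Fintype.card K with hq
  have card_matrix : (Nat.card (Matrix (Fin n) (Fin n) K) : ℝ) = ∏ _i : Fin n, (q : ℝ) ^ n := by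
    simp [Matrix, hq]
  have factor (i : Fin n) : ((q ^ n - q ^ (i : ℕ) : ℕ) : ℝ) / (q : ℝ) ^ n =
      1 - (1 / q : ℝ) ^ ((n - 1 - i) + 1) := by
    have q_pos : 0 < q := Fintype.card_pos
    have q_ne_zero : (q : ℝ) ≠ 0 := by exact_mod_cast q_pos.ne'
    rw [Nat.cast_sub (Nat.pow_le_pow_right q_pos i.is_lt.le), sub_div, Nat.cast_pow,
      Nat.cast_pow, div_self (pow_ne_zero _ q_ne_zero), one_div_pow,
      show n - 1 - (i : ℕ) + 1 = n - i by omega, pow_sub₀ _ q_ne_zero i.is_lt.le]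
    field_simp
  rw [proportion, natCard_isUnit, Matrix.card_GL_field, card_matrix, Nat.card_eq_fintype_card,
    Nat.cast_prod, ← Finset.prod_div_distrib, Finset.prod_congr rfl fun i _ => factor i,
    Fin.prod_univ_eq_prod_range fun i => 1 - (1 / q : ℝ) ^ ((n - 1 - i) + 1),
    Finset.prod_range_reflect fun j => 1 - (1 / q : ℝ) ^ (j + 1)]

lemma one_sub_sub_sq_le_proportion_isUnit_matrix (K : Type*) [Field K] [Finite K] (n : ℕ) :
    1 - 1 / Nat.card K - (1 / Nat.card K) ^ 2 ≤
      proportion (IsUnit : Matrix (Fin n) (Fin n) K → Prop) := by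
  rw [proportion_isUnit_matrix]
  refine one_sub_sub_sq_le_prod (by positivity) ?_ n
  exact div_le_one_of_le₀ (by exact_mod_cast Nat.card_pos (α := K)) (by positivity)

end InvertibleMatrices

section WordPolynomial

lemma isHomogeneous_det {σ R m : Type*} [CommRing R] [Fintype m] [DecidableEq m]
    {A : Matrix m m (MvPolynomial σ R)} {d : ℕ} (hA : ∀ r s, (A r s).IsHomogeneous d) :
    A.det.IsHomogeneous (Fintype.card m * d) := by
  rw [Matrix.det_apply']
  refine IsHomogeneous.sum _ _ _ fun τ _ => ?_
  have sign_homogeneous :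
      IsHomogeneous ((Equiv.Perm.sign τ : ℤ) : MvPolynomial σ R) 0 := by
    rw [← map_intCast (C : R →+* MvPolynomial σ R)]
    exact isHomogeneous_C _ _
  simpa using sign_homogeneous.mul
    (IsHomogeneous.prod Finset.univ (fun r => A (τ r) r) _ fun r _ => hA (τ r) r)

lemma isHomogeneous_adjugate {σ R : Type*} [CommRing R] {n d : ℕ}
    {A : Matrix (Fin n) (Fin n) (MvPolynomial σ R)} (hA : ∀ r s, (A r s).IsHomogeneous d)
    (r s : Fin n) : (A.adjugate r s).IsHomogeneous ((n - 1) * d) := by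
  cases n with
  | zero => exact r.elim0
  | succ n =>
    have sign_homogeneous :
        IsHomogeneous ((-1) ^ (s + r : ℕ) : MvPolynomial σ R) 0 := by
      simpa using ((isHomogeneous_one σ R).neg).pow (s + r : ℕ)
    rw [Matrix.adjugate_fin_succ_eq_det_submatrix]
    simpa using sign_homogeneous.mul
      (isHomogeneous_det (A := A.submatrix s.succAbove r.succAbove) fun _ _ => hA _ _)

variable {ι : Type*} [DecidableEq ι]

/-- The number of letters `x_i` and `x_i⁻¹` in the reduced word of `ω`. -/
def letterCount (ω : FreeGroup ι) (i : ι) : ℕ :=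
  (ω.toWord.map Prod.fst).count i

lemma sum_letterCount [Fintype ι] (ω : FreeGroup ι) : ∑ i, letterCount ω i = ω.norm := by
  simpa [letterCount, FreeGroup.norm] using Multiset.sum_count_eq_card
    (s := Finset.univ) (m := (ω.toWord.map Prod.fst : Multiset ι)) (by simp)

variable {K : Type*} [Field K] {n : ℕ} {i : ι} {g : ι → GL (Fin n) K}

variable (i g) in
/-- The letter `a` of a word, as a matrix over the ring of polynomials in the entries of a matrix
`X`: `x_i` becomes `X`, `x_i⁻¹` becomes the adjugate of `X` (which agrees with the inverse up to a
scalar and has homogeneous polynomial entries), and the other letters become their values at `g`. -/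
noncomputable def genericLetter (a : ι × Bool) :
    Matrix (Fin n) (Fin n) (MvPolynomial (Fin n × Fin n) K) :=
  if a.1 = i then
    cond a.2 (Matrix.mvPolynomialX _ _ K) (Matrix.mvPolynomialX _ _ K).adjugate
  else (cond a.2 (g a.1) (g a.1)⁻¹).val.map C

variable (i g) in
/-- The product of the `genericLetter`s of the word `L`: up to a scalar, the value of `L` when the
`i`-th coordinate is a variable matrix and the others are those of `g`. -/
noncomputable def genericWord (L : List (ι × Bool)) :
    Matrix (Fin n) (Fin n) (MvPolynomial (Fin n × Fin n) K) :=
  (L.map (genericLetter i g)).prod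

lemma exists_isHomogeneous_genericLetter (hn : 2 ≤ n) (a : ι × Bool) :
    ∃ d ≤ if a.1 = i then n - 1 else 0, ∀ r s, (genericLetter i g a r s).IsHomogeneous d := by
  have X_homogeneous (r s : Fin n) : (Matrix.mvPolynomialX _ _ K r s).IsHomogeneous 1 :=
    isHomogeneous_X K (r, s)
  unfold genericLetter
  split_ifs
  · cases a.2
    · exact ⟨n - 1, le_rfl, by simpa using isHomogeneous_adjugate X_homogeneous⟩
    · exact ⟨1, by omega, X_homogeneous⟩
  · exact ⟨0, le_rfl, fun r s => isHomogeneous_C _ _⟩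

lemma exists_isHomogeneous_genericWord (hn : 2 ≤ n) (L : List (ι × Bool)) :
    ∃ d ≤ (n - 1) * (L.map Prod.fst).count i,
      ∀ r s, (genericWord i g L r s).IsHomogeneous d := by
  induction L with
  | nil =>
    refine ⟨0, Nat.zero_le _, fun r s => ?_⟩
    rw [genericWord, List.map_nil, List.prod_nil, Matrix.one_apply]
    split_ifs
    exacts [isHomogeneous_one _ _, isHomogeneous_zero _ _ _]
  | cons a L ih =>
    obtain ⟨d, hd, letter_homogeneous⟩ := exists_isHomogeneous_genericLetter (i := i) (g := g) hn a
    obtain ⟨e, he, word_homogeneous⟩ := ih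
    refine ⟨d + e, ?_, fun r s => ?_⟩
    · rw [List.map_cons, List.count_cons, mul_add, add_comm d]
      gcongr
      simpa using hd
    · rw [genericWord, List.map_cons, List.prod_cons, Matrix.mul_apply]
      exact IsHomogeneous.sum _ _ _ fun t _ => (letter_homogeneous r t).mul (word_homogeneous t s)

/-- Evaluation of a matrix of polynomials in the entries of a matrix at the matrix `x`. -/
noncomputable abbrev evalEntries (x : GL (Fin n) K) :
    Matrix (Fin n) (Fin n) (MvPolynomial (Fin n × Fin n) K) →+* Matrix (Fin n) (Fin n) K :=
  (eval fun p => x p.1 p.2).mapMatrix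

lemma evalEntries_map_C (x y : GL (Fin n) K) : evalEntries x (y.val.map C) = y.val := by
  ext r s
  simp

lemma evalEntries_mvPolynomialX (x : GL (Fin n) K) :
    evalEntries x (Matrix.mvPolynomialX _ _ K) = x.val :=
  Matrix.mvPolynomialX_mapMatrix_eval x.val

lemma evalEntries_adjugate_mvPolynomialX (x : GL (Fin n) K) :
    evalEntries x (Matrix.mvPolynomialX _ _ K).adjugate =
      Matrix.GeneralLinearGroup.det x • (x⁻¹).val := by
  have det_isUnit : IsUnit x.val.det := (Matrix.GeneralLinearGroup.det x).isUnit
  rw [RingHom.map_adjugate, evalEntries_mvPolynomialX, Matrix.coe_units_inv, Matrix.inv_def,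
    Units.smul_def, smul_smul, Matrix.GeneralLinearGroup.val_det_apply,
    Ring.mul_inverse_cancel _ det_isUnit, one_smul]

lemma exists_evalEntries_genericLetter (x : GL (Fin n) K) (a : ι × Bool) :
    ∃ c : Kˣ, evalEntries x (genericLetter i g a) =
      c • (cond a.2 (update g i x a.1) (update g i x a.1)⁻¹).val := by
  obtain ⟨j, b⟩ := a
  obtain rfl | hj := eq_or_ne j i
  · cases b
    · exact ⟨_, by simpa [genericLetter] using evalEntries_adjugate_mvPolynomialX x⟩
    · exact ⟨1, by simpa [genericLetter] using evalEntries_mvPolynomialX x⟩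
  · refine ⟨1, ?_⟩
    rw [genericLetter, if_neg hj, evalEntries_map_C, update_of_ne hj, one_smul]

lemma exists_evalEntries_genericWord (x : GL (Fin n) K) (ω : FreeGroup ι) :
    ∃ c : Kˣ, evalEntries x (genericWord i g ω.toWord) =
      c • (FreeGroup.lift (update g i x) ω).val := by
  suffices h : ∀ L : List (ι × Bool), ∃ c : Kˣ, evalEntries x (genericWord i g L) =
      c • (FreeGroup.lift (update g i x) (FreeGroup.mk L)).val by
    simpa only [FreeGroup.mk_toWord] using h ω.toWord
  intro L
  induction L with
  | nil => exact ⟨1, by simp [genericWord]⟩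
  | cons a L ih =>
    obtain ⟨c, hc⟩ := exists_evalEntries_genericLetter (i := i) (g := g) x a
    obtain ⟨c', hc'⟩ := ih
    refine ⟨c * c', ?_⟩
    rw [FreeGroup.lift_mk, genericWord] at hc' ⊢
    rw [List.map_cons, List.map_cons, List.prod_cons, List.prod_cons, map_mul, hc, hc',
      Units.val_mul, smul_mul_smul_comm]

theorem exists_isHomogeneous_of_lift_notMem_center (hn : 2 ≤ n) {ω : FreeGroup ι}
    (hg : FreeGroup.lift g ω ∉ Subgroup.center (GL (Fin n) K)) :
    ∃ d ≤ (n - 1) * letterCount ω i, ∃ F : MvPolynomial (Fin n × Fin n) K,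
      F.IsHomogeneous d ∧ F ≠ 0 ∧ ∀ x : GL (Fin n) K,
        FreeGroup.lift (update g i x) ω ∈ Subgroup.center (GL (Fin n) K) →
          eval (fun p => x p.1 p.2) F = 0 := by
  obtain ⟨d, hd, word_homogeneous⟩ :=
    exists_isHomogeneous_genericWord (i := i) (g := g) hn ω.toWord
  obtain ⟨y, hy⟩ : ∃ y, y * FreeGroup.lift g ω ≠ FreeGroup.lift g ω * y := by
    simpa [Subgroup.mem_center_iff] using hg
  set W := genericWord i g ω.toWord
  let Q := y.val.map C * W - W * y.val.map C
  have eval_commutator (x : GL (Fin n) K) : ∃ c : Kˣ,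
      evalEntries x Q =
        c • ((y * FreeGroup.lift (update g i x) ω).val -
          (FreeGroup.lift (update g i x) ω * y).val) := by
    obtain ⟨c, hc⟩ := exists_evalEntries_genericWord (i := i) (g := g) x ω
    refine ⟨c, ?_⟩
    rw [map_sub, map_mul, map_mul, hc, evalEntries_map_C, Units.val_mul, Units.val_mul, smul_sub,
      mul_smul_comm, smul_mul_assoc]
  have Q_ne_zero : Q ≠ 0 := fun hQ => by
    obtain ⟨c, hc⟩ := eval_commutator (g i)
    rw [hQ, map_zero, update_eq_self, eq_comm, smul_eq_zero_iff_eq, sub_eq_zero] at hc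
    exact hy (Units.ext hc)
  obtain ⟨r, s, hrs⟩ : ∃ r s, Q r s ≠ 0 := by
    by_contra! hzero
    exact Q_ne_zero (Matrix.ext hzero)
  refine ⟨d, hd, Q r s, ?_, hrs, fun x hx => ?_⟩
  · simp only [Q, Matrix.sub_apply, Matrix.mul_apply]
    refine (IsHomogeneous.sum _ _ _ fun t _ => ?_).sub (IsHomogeneous.sum _ _ _ fun t _ => ?_)
    · exact (word_homogeneous t s).C_mul (y r t)
    · simpa using (word_homogeneous r t).mul (isHomogeneous_C _ (y t s))
  · obtain ⟨c, hc⟩ := eval_commutator x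
    rw [Subgroup.mem_center_iff.1 hx y, sub_self, smul_zero] at hc
    exact congrFun (congrFun hc r) s

end WordPolynomial

section ProjectiveLinearGroup

lemma serre_bound_le_mul_one_sub_sub_sq {q d : ℝ} (hq : 2 ≤ q) (hd : d ≤ q) :
    (1 + d * (q - 1)) / q ^ 2 ≤ (d / q + 8 / q ^ 2) * (1 - 1 / q - (1 / q) ^ 2) := by
  have q_pos : 0 < q := by linarith
  have numerator_nonneg : 0 ≤ q * (q - d) + 2 * (q - 2) * (3 * q + 2) := by
    nlinarith
  have difference : (d / q + 8 / q ^ 2) * (1 - 1 / q - (1 / q) ^ 2) - (1 + d * (q - 1)) / q ^ 2 =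
      (q * (q - d) + 2 * (q - 2) * (3 * q + 2)) / q ^ 4 := by
    field_simp
    ring
  rw [← sub_nonneg, difference]
  exact div_nonneg numerator_nonneg (pow_pos q_pos 4).le

variable {K : Type*} [Field K] [Finite K] {n : ℕ}

lemma proportion_GL_le {P : Matrix (Fin n) (Fin n) K → Prop} {d : ℝ}
    (hP : proportion P ≤ (1 + d * (Nat.card K - 1)) / (Nat.card K : ℝ) ^ 2) :
    proportion (fun x : GL (Fin n) K => P x) ≤ d / Nat.card K + 8 / (Nat.card K : ℝ) ^ 2 := by
  have isUnit_ge := one_sub_sub_sq_le_proportion_isUnit_matrix K n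
  have two_le_card : (2 : ℝ) ≤ Nat.card K := by exact_mod_cast Finite.one_lt_card (α := K)
  set q := (Nat.card K : ℝ)
  obtain hqd | hdq := le_or_gt q d
  · calc proportion (fun x : GL (Fin n) K => P x) ≤ 1 := proportion_le_one _
      _ ≤ d / q := (one_le_div (by linarith)).2 hqd
      _ ≤ d / q + 8 / q ^ 2 := le_add_of_nonneg_right (by positivity)
  · have density_pos : 0 < 1 - 1 / q - (1 / q) ^ 2 := by
      have inv_le : 1 / q ≤ 1 / 2 := by gcongr
      have inv_nonneg : 0 ≤ 1 / q := by positivity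
      nlinarith
    refine le_of_mul_le_mul_right ?_ density_pos
    calc proportion (fun x : GL (Fin n) K => P x) * (1 - 1 / q - (1 / q) ^ 2)
        ≤ proportion (fun x : GL (Fin n) K => P x) *
            proportion (IsUnit : Matrix (Fin n) (Fin n) K → Prop) :=
          mul_le_mul_of_nonneg_left isUnit_ge (proportion_nonneg _)
      _ ≤ proportion P := proportion_units_mul_proportion_isUnit_le P
      _ ≤ (1 + d * (q - 1)) / q ^ 2 := hP
      _ ≤ (d / q + 8 / q ^ 2) * (1 - 1 / q - (1 / q) ^ 2) :=
          serre_bound_le_mul_one_sub_sub_sq two_le_card hdq.le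

lemma proportion_GL_eval_eq_zero_le {d : ℕ} {F : MvPolynomial (Fin n × Fin n) K}
    (hF : F.IsHomogeneous d) (hF0 : F ≠ 0) :
    proportion (fun x : GL (Fin n) K => eval (fun p => x p.1 p.2) F = 0) ≤
      d / Nat.card K + 8 / (Nat.card K : ℝ) ^ 2 :=
  proportion_GL_le (P := fun x => eval (uncurry x) F = 0) <|
    (proportion_congr (Q := fun x => eval x F = 0)
      (Equiv.curry (Fin n) (Fin n) K).symm fun _ => Iff.rfl).trans_le <|
    proportion_eval_eq_zero_le_of_isHomogeneous hF hF0

variable {ι : Type*} [DecidableEq ι]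

lemma proportion_update_lift_mem_center_le (hn : 2 ≤ n) {ω : FreeGroup ι} (i : ι)
    {g : ι → GL (Fin n) K} (hg : FreeGroup.lift g ω ∉ Subgroup.center (GL (Fin n) K)) :
    proportion (fun x => FreeGroup.lift (update g i x) ω ∈ Subgroup.center (GL (Fin n) K)) ≤
      ((n - 1) * letterCount ω i) / Nat.card K + 8 / (Nat.card K : ℝ) ^ 2 := by
  obtain ⟨d, hd, F, hF, hF0, eval_eq_zero⟩ :=
    exists_isHomogeneous_of_lift_notMem_center (i := i) hn hg
  have degree_le : (d : ℝ) ≤ (n - 1) * letterCount ω i := by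
    rw [← Nat.cast_pred (by omega)]
    exact_mod_cast hd
  calc proportion (fun x => FreeGroup.lift (update g i x) ω ∈ Subgroup.center (GL (Fin n) K))
      ≤ proportion (fun x : GL (Fin n) K => eval (fun p => x p.1 p.2) F = 0) :=
        proportion_mono eval_eq_zero
    _ ≤ d / Nat.card K + 8 / (Nat.card K : ℝ) ^ 2 := proportion_GL_eval_eq_zero_le hF hF0
    _ ≤ ((n - 1) * letterCount ω i) / Nat.card K + 8 / (Nat.card K : ℝ) ^ 2 := by gcongr

lemma proportion_lift_mem_center_le [Fintype ι] (hn : 2 ≤ n) {ω : FreeGroup ι}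
    {g : ι → GL (Fin n) K} (hg : FreeGroup.lift g ω ∉ Subgroup.center (GL (Fin n) K)) :
    proportion (fun g => FreeGroup.lift g ω ∈ Subgroup.center (GL (Fin n) K)) ≤
      (n - 1) * ω.norm / Nat.card K + 8 * Fintype.card ι / (Nat.card K : ℝ) ^ 2 := by
  have one_le_n : (1 : ℝ) ≤ n := by exact_mod_cast one_le_two.trans hn
  calc proportion (fun g => FreeGroup.lift g ω ∈ Subgroup.center (GL (Fin n) K))
      ≤ ∑ i, (((n - 1) * letterCount ω i) / Nat.card K + 8 / (Nat.card K : ℝ) ^ 2) :=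
        proportion_le_sum_of_update
          (fun i => by have := sub_nonneg.2 one_le_n; positivity)
          (fun i _ h => proportion_update_lift_mem_center_le hn i h) hg
    _ = (n - 1) * ω.norm / Nat.card K + 8 * Fintype.card ι / (Nat.card K : ℝ) ^ 2 := by
        rw [Finset.sum_add_distrib, ← Finset.sum_div, ← Finset.mul_sum, ← Nat.cast_sum,
          sum_letterCount, Finset.sum_const, Finset.card_univ, nsmul_eq_mul]
        ring

theorem stmt3_general [Fintype ι] (hn : 2 ≤ n) (ω : FreeGroup ι)
    (h : ∃ h : ι → PGL(n, K), FreeGroup.lift h ω ≠ 1) :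
    (Nat.card {g : ι → PGL(n, K) // FreeGroup.lift g ω = 1} : ℝ) / Nat.card (ι → PGL(n, K)) ≤
      (n - 1) * ω.norm / Nat.card K + 8 * Fintype.card ι / (Nat.card K : ℝ) ^ 2 := by
  let π : (ι → GL (Fin n) K) →* (ι → PGL(n, K)) :=
    MonoidHom.compLeft Matrix.ProjGenLinGroup.mk ι
  have π_surjective : Surjective π := Matrix.ProjGenLinGroup.mk_surjective.comp_left
  have lift_π_eq_one (g : ι → GL (Fin n) K) :
      FreeGroup.lift (π g) ω = 1 ↔ FreeGroup.lift g ω ∈ Subgroup.center (GL (Fin n) K) := by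
    have lift_comp : FreeGroup.lift (π g) = Matrix.ProjGenLinGroup.mk.comp (FreeGroup.lift g) := by
      ext i
      simp [π]
    rw [lift_comp, MonoidHom.comp_apply, Matrix.ProjGenLinGroup.mk_eq_one]
  obtain ⟨h, hh⟩ := h
  obtain ⟨g, rfl⟩ := π_surjective h
  rw [Ne, lift_π_eq_one] at hh
  change proportion (fun g : ι → PGL(n, K) => FreeGroup.lift g ω = 1) ≤ _
  rw [← proportion_comp_of_surjective π_surjective]
  simp only [lift_π_eq_one]
  exact proportion_lift_mem_center_le hn hh

end ProjectiveLinearGroup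

/-- Fix k ≥ 1. There exists C > 0 such that for every prime p and every
nonidentity ω ∈ F_k of word length l: if some tuple in PGL₂(ℤ/pℤ)^k does not satisfy ω, then the
proportion of tuples (g₁,…,g_k) ∈ PGL₂(ℤ/pℤ)^k with ω(g₁,…,g_k) = 1 is at most l/p + C/p². -/
theorem stmt3 (k : ℕ) (hk : 1 ≤ k) :
    ∃ C : ℝ, 0 < C ∧
      ∀ (p : ℕ), p.Prime →
        ∀ ω : FreeGroup (Fin k), ω ≠ 1 →
          (∃ h : Fin k → PGL2 p, FreeGroup.lift h ω ≠ 1) →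
          (Nat.card {g : Fin k → PGL2 p // FreeGroup.lift g ω = 1} : ℝ) /
              (Nat.card (Fin k → PGL2 p) : ℝ) ≤
            (FreeGroup.norm ω : ℝ) / p + C / (p : ℝ) ^ 2 := by
  refine ⟨8 * k, by positivity, fun p hp ω _ h => ?_⟩
  have : Fact p.Prime := ⟨hp⟩
  exact (stmt3_general (K := ZMod p) le_rfl ω h).trans_eq (by norm_num)
end

section
/- Fix an integer k ≥ 1. There exists a constant c > 0 such that for every prime p, every element ω ≠ 1 of the free group F_k on k generators satisfying ω(g₁, …, g_k) = 1 for all tuples (g₁, …, g_k) ∈ SL₂(ℤ/pℤ)^k has word length at least c·p/log p. -/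
open MeasureTheory

/-!
For a slope `c` let `u c t` be the transvection of the plane along the line of slope `c`, with
parameter `t`. With `t` an indeterminate, a ping-pong argument on leading terms shows that a
nonempty reduced word in the `u c t` does not fix `(0, 1)`: a syllable `(u c t) ^ m` multiplies the
leading term of a vector off the line of slope `c` by `m * t` and turns it into that line, hence off
every other line, so that the next syllable raises the degree again. Here `m ≠ 0` in characteristic
`p` because `m` is at most the length of the word. A word of length less than `p` therefore gives a
nonzero polynomial of degree less than `p`; a law would make it vanish at all `t : ZMod p`. Such a
word involves fewer than `p` generators, so `ZMod p` has enough slopes to tell them apart, whatever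
`k` is.
-/

open Polynomial Matrix
open scoped MatrixGroups

section Shear

variable {A B : Type*} [CommRing A] [CommRing B]

/-- The linear form `(x₀, x₁) ↦ c x₀ - x₁` on the plane, whose kernel is the line of slope `c`. -/
def lineForm (c : A) (x : Fin 2 → A) : A := c * x 0 - x 1

/-- The transvection `x ↦ x + q * lineForm c x • (1, c)` along the line of slope `c`. -/
def shear (c q : A) : SL(2, A) :=
  ⟨!![1 + q * c, -q; q * c * c, 1 - q * c], by rw [det_fin_two_of]; ring⟩

lemma coe_shear (c q : A) :
    (shear c q : Matrix (Fin 2) (Fin 2) A) = !![1 + q * c, -q; q * c * c, 1 - q * c] :=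
  rfl

lemma shear_smul (c q : A) (x : Fin 2 → A) :
    shear c q • x = ![x 0 + q * lineForm c x, x 1 + q * (c * lineForm c x)] := by
  rw [Matrix.SpecialLinearGroup.smul_def, smul_eq_mulVec, coe_shear]
  ext i
  fin_cases i <;> simp [mulVec, dotProduct, Fin.sum_univ_two, lineForm] <;> ring

lemma lineForm_shear_smul (c c' q : A) (x : Fin 2 → A) :
    lineForm c' (shear c q • x) = lineForm c' x + q * (c' - c) * lineForm c x := by
  simp only [shear_smul, lineForm, cons_val_zero, cons_val_one]
  ring

lemma shear_inv (c q : A) : (shear c q)⁻¹ = shear c (-q) := by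
  ext i j
  fin_cases i <;> fin_cases j <;> simp [coe_shear, adjugate_fin_two_of, sub_eq_add_neg]

lemma shear_mul (c q r : A) : shear c q * shear c r = shear c (q + r) := by
  ext i j
  fin_cases i <;> fin_cases j <;> simp [coe_shear] <;> ring

lemma shear_pow (c q : A) (m : ℕ) : shear c q ^ m = shear c (m * q) := by
  induction m with
  | zero => ext i j; fin_cases i <;> fin_cases j <;> simp [coe_shear]
  | succ m ih => rw [pow_succ, ih, shear_mul, Nat.cast_succ, add_one_mul]

lemma map_shear (g : A →+* B) (c q : A) :
    SpecialLinearGroup.map g (shear c q) = shear (g c) (g q) := by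
  ext i j
  fin_cases i <;> fin_cases j <;> simp [coe_shear]

end Shear

section Degree

variable {R : Type*} [CommRing R]

lemma natDegree_add_C_mul_X_mul [NoZeroDivisors R] {P Q : R[X]} {s : R} (hs : s ≠ 0) (hQ : Q ≠ 0)
    (hPQ : P.natDegree ≤ Q.natDegree) : (P + C s * X * Q).natDegree = Q.natDegree + 1 := by
  have : Nontrivial R := ⟨s, 0, hs⟩
  have hsX : (C s * X * Q).natDegree = Q.natDegree + 1 := by
    rw [mul_assoc, natDegree_C_mul hs, natDegree_X_mul hQ]
  rw [natDegree_add_eq_right_of_natDegree_lt (by lia), hsX]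

variable {n : ℕ} {x : Fin 2 → R[X]}

lemma natDegree_lineForm_le (hx : ∀ i, (x i).natDegree ≤ n) (c : R) :
    (lineForm (C c) x).natDegree ≤ n :=
  (natDegree_sub_le_of_le ((natDegree_C_mul_le c (x 0)).trans (hx 0)) (hx 1)).trans_eq (max_self n)

lemma natDegree_shear_smul_le (hx : ∀ i, (x i).natDegree ≤ n) (c s : R) (i : Fin 2) :
    ((shear (C c) (C s * X) • x) i).natDegree ≤ n + 1 := by
  have hform := natDegree_lineForm_le hx c
  have hadd (P Q : R[X]) (hP : P.natDegree ≤ n) (hQ : Q.natDegree ≤ n) :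
      (P + C s * X * Q).natDegree ≤ n + 1 := by
    compute_degree
    lia
  rw [shear_smul]
  fin_cases i
  · exact hadd _ _ (hx 0) hform
  · exact hadd _ _ (hx 1) ((natDegree_C_mul_le c _).trans hform)

end Degree

section Transversality

variable {R : Type*} [CommRing R]

/-- A polynomial vector is transverse to the slope `c` if its terms of top degree do not lie on the
line of slope `c`, expressed by saying that the linear form cutting out this line does not lower the
degree. This is the ping-pong condition under which `shear (C c) (C s * X)` raises the degree. -/
def IsTransverse (c : R) (x : Fin 2 → R[X]) : Prop :=
  lineForm (C c) x ≠ 0 ∧ ∀ i, (x i).natDegree ≤ (lineForm (C c) x).natDegree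

lemma isTransverse_zero_one [Nontrivial R] (c : R) : IsTransverse c ![0, 1] := by
  have hform : lineForm (C c) ![0, 1] = -1 := by simp [lineForm]
  rw [IsTransverse, hform]
  exact ⟨by simp, fun i => by fin_cases i <;> simp⟩

variable [NoZeroDivisors R] {c s : R} {x : Fin 2 → R[X]}

lemma IsTransverse.shear_smul (hx : IsTransverse c x) (hs : s ≠ 0) {c' : R} (hc : c ≠ c') :
    IsTransverse c' (shear (C c) (C s * X) • x) := by
  have hform : lineForm (C c') (shear (C c) (C s * X) • x) =
      lineForm (C c') x + C (s * (c' - c)) * X * lineForm (C c) x := by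
    rw [lineForm_shear_smul, C_mul, C_sub, mul_right_comm (C s)]
  have hdeg : (lineForm (C c') (shear (C c) (C s * X) • x)).natDegree =
      (lineForm (C c) x).natDegree + 1 := by
    rw [hform]
    exact natDegree_add_C_mul_X_mul (mul_ne_zero hs (sub_ne_zero.2 hc.symm)) hx.1
      (natDegree_lineForm_le hx.2 c')
  refine ⟨ne_zero_of_natDegree_gt (n := 0) (by lia), fun i => ?_⟩
  rw [hdeg]
  exact natDegree_shear_smul_le hx.2 c s i

lemma IsTransverse.shear_smul_zero_ne_zero (hx : IsTransverse c x) (hs : s ≠ 0) :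
    (shear (C c) (C s * X) • x) 0 ≠ 0 := by
  have hdeg := natDegree_add_C_mul_X_mul hs hx.1 (hx.2 0)
  rw [_root_.shear_smul, cons_val_zero]
  exact ne_zero_of_natDegree_gt (n := 0) (by lia)

end Transversality

section PolyShear

variable {R : Type*} [CommRing R]

/-- The representation over `R[X]` of the free group on the set of slopes `R` in which the slope `c`
acts by the transvection along the line of slope `c` with indeterminate parameter. -/
noncomputable def polyShear : FreeGroup R →* SL(2, R[X]) := FreeGroup.lift fun c => shear (C c) X

lemma map_evalRingHom_polyShear (t : R) (ω : FreeGroup R) :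
    SpecialLinearGroup.map (evalRingHom t) (polyShear ω) =
      FreeGroup.lift (fun c => shear c t) ω := by
  suffices h : (SpecialLinearGroup.map (evalRingHom t)).comp polyShear =
      FreeGroup.lift (fun c : R => shear c t) from DFunLike.congr_fun h ω
  ext1 c
  simp [polyShear, map_shear]

lemma eval_polyShear_smul_zero_one (t : R) (ω : FreeGroup R) :
    ((polyShear ω • (![0, 1] : Fin 2 → R[X])) 0).eval t =
      FreeGroup.lift (fun c => shear c t) ω 0 1 := by
  rw [← map_evalRingHom_polyShear]
  simp [Matrix.SpecialLinearGroup.smul_def, smul_eq_mulVec]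

lemma polyShear_mk_cons (a : R × Bool) (L : List (R × Bool)) :
    polyShear (.mk (a :: L)) = polyShear (.mk [a]) * polyShear (.mk L) := by
  rw [← map_mul, FreeGroup.mul_mk, List.singleton_append]

lemma polyShear_mk_singleton (a : R × Bool) :
    polyShear (.mk [a]) = shear (C a.1) (C (cond a.2 1 (-1)) * X) := by
  rcases a with ⟨c, _ | _⟩ <;> simp [polyShear, shear_inv]

lemma polyShear_mk_singleton_pow (a : R × Bool) (m : ℕ) :
    polyShear (.mk [a]) ^ m = shear (C a.1) (C ((m : R) * cond a.2 1 (-1)) * X) := by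
  rw [polyShear_mk_singleton, shear_pow, C_mul, C_eq_natCast, mul_assoc]

lemma natDegree_polyShear_mk_smul_le (L : List (R × Bool)) (i : Fin 2) :
    ((polyShear (.mk L) • (![0, 1] : Fin 2 → R[X])) i).natDegree ≤ L.length := by
  induction L generalizing i with
  | nil =>
    rw [← FreeGroup.one_eq_mk, map_one, one_smul]
    fin_cases i <;> simp
  | cons a L ih =>
    rw [polyShear_mk_cons, mul_smul, polyShear_mk_singleton, List.length_cons]
    exact natDegree_shear_smul_le ih _ _ i

lemma natCast_mul_sign_ne_zero [Nontrivial R] {n m : ℕ} (b : Bool)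
    (hcast : Set.InjOn (Nat.cast : ℕ → R) (Set.Iic n)) (hm : 0 < m) (hmn : m ≤ n) :
    (m : R) * cond b 1 (-1) ≠ 0 := by
  have hm0 : (m : R) ≠ 0 := fun h => hm.ne' (hcast hmn n.zero_le (h.trans Nat.cast_zero.symm))
  cases b <;> simpa using hm0

variable [IsDomain R]

-- A letter repeating its neighbour extends the current syllable, any other starts a new one.
lemma exists_isTransverse_polyShear_mk_cons (a : R × Bool) (L : List (R × Bool))
    (hred : FreeGroup.IsReduced (a :: L))
    (hcast : Set.InjOn (Nat.cast : ℕ → R) (Set.Iic (a :: L).length)) :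
    ∃ m : ℕ, 0 < m ∧ m ≤ (a :: L).length ∧ ∃ x, IsTransverse a.1 x ∧
      polyShear (.mk (a :: L)) • ![0, 1] = polyShear (.mk [a]) ^ m • x := by
  induction L generalizing a with
  | nil => exact ⟨1, one_pos, le_rfl, ![0, 1], isTransverse_zero_one a.1, by rw [pow_one]⟩
  | cons b L ih =>
    obtain ⟨hab, hredL⟩ := FreeGroup.isReduced_cons_cons.1 hred
    have hcastL : Set.InjOn (Nat.cast : ℕ → R) (Set.Iic (b :: L).length) :=
      hcast.mono (Set.Iic_subset_Iic.2 (Nat.le_succ _))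
    obtain ⟨m, hm, hmL, x, hx, hbL⟩ := ih b hredL hcastL
    rw [polyShear_mk_cons a, mul_smul, hbL]
    by_cases h : a.1 = b.1
    · obtain rfl : a = b := Prod.ext h (hab h)
      exact ⟨m + 1, m.succ_pos, Nat.succ_le_succ hmL, x, hx, by rw [pow_succ', mul_smul]⟩
    · refine ⟨1, one_pos, by simp, _, ?_, by rw [pow_one]⟩
      rw [polyShear_mk_singleton_pow]
      exact hx.shear_smul (natCast_mul_sign_ne_zero b.2 hcastL hm hmL) (Ne.symm h)

lemma polyShear_mk_smul_zero_ne_zero {L : List (R × Bool)} (hL : L ≠ [])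
    (hred : FreeGroup.IsReduced L)
    (hcast : Set.InjOn (Nat.cast : ℕ → R) (Set.Iic L.length)) :
    (polyShear (.mk L) • (![0, 1] : Fin 2 → R[X])) 0 ≠ 0 := by
  obtain ⟨a, L, rfl⟩ := List.exists_cons_of_ne_nil hL
  obtain ⟨m, hm, hmL, x, hx, haL⟩ := exists_isTransverse_polyShear_mk_cons a L hred hcast
  rw [haL, polyShear_mk_singleton_pow]
  exact hx.shear_smul_zero_ne_zero (natCast_mul_sign_ne_zero a.2 hcast hm hmL)

lemma exists_lift_shear_ne_one {L : List (R × Bool)} (hL : L ≠ []) (hred : FreeGroup.IsReduced L)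
    (hcast : Set.InjOn (Nat.cast : ℕ → R) (Set.Iic L.length)) :
    ∃ t : R, FreeGroup.lift (fun c => shear c t) (.mk L) ≠ 1 := by
  by_contra! htriv
  refine polyShear_mk_smul_zero_ne_zero hL hred hcast
    (eq_zero_of_natDegree_lt_card_of_eval_eq_zero _
      (f := fun i : Fin (L.length + 1) => ((i : ℕ) : R)) ?_ (fun i => ?_) ?_)
  · exact fun i j hij => Fin.ext (hcast i.is_le j.is_le hij)
  · rw [eval_polyShear_smul_zero_one, htriv]
    simp
  · rw [Fintype.card_fin]
    exact Nat.lt_succ_of_le (natDegree_polyShear_mk_smul_le L 0)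

end PolyShear

section Law

variable {α β R : Type*}

lemma isReduced_map_of_injOn {f : α → β} {L : List (α × Bool)}
    (hf : Set.InjOn f {i | i ∈ L.map Prod.fst}) (hL : FreeGroup.IsReduced L) :
    FreeGroup.IsReduced (L.map fun a => (f a.1, a.2)) :=
  (List.isChain_map _).2 <| List.IsChain.imp_of_mem_imp
    (fun _ _ ha hb hab h => hab (hf (List.mem_map_of_mem ha) (List.mem_map_of_mem hb) h)) hL

lemma lift_map {G : Type*} [Group G] (f : α → β) (h : β → G) (ω : FreeGroup α) :
    FreeGroup.lift h (FreeGroup.map f ω) = FreeGroup.lift (fun i => h (f i)) ω :=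
  FreeGroup.lift_unique ((FreeGroup.lift h).comp (FreeGroup.map f)) (by simp)

lemma exists_injOn_of_natCast_injOn [AddMonoidWithOne R] (l : List α)
    (hcast : Set.InjOn (Nat.cast : ℕ → R) (Set.Iic l.length)) :
    ∃ f : α → R, Set.InjOn f {i | i ∈ l} := by
  classical
  exact ⟨fun i => (l.idxOf i : R), fun _ hi _ _ hij =>
    (List.idxOf_inj hi).1 (hcast List.idxOf_le_length List.idxOf_le_length hij)⟩

variable [DecidableEq α] [CommRing R] [IsDomain R]

theorem exists_lift_ne_one_of_natCast_injOn {ω : FreeGroup α} (hω : ω ≠ 1)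
    (hcast : Set.InjOn (Nat.cast : ℕ → R) (Set.Iic ω.norm)) :
    ∃ g : α → SL(2, R), FreeGroup.lift g ω ≠ 1 := by
  obtain ⟨f, hf⟩ := exists_injOn_of_natCast_injOn (ω.toWord.map Prod.fst)
    (by rwa [List.length_map])
  obtain ⟨t, ht⟩ := exists_lift_shear_ne_one (L := ω.toWord.map fun a => (f a.1, a.2))
    (by simpa using hω) (isReduced_map_of_injOn hf FreeGroup.isReduced_toWord)
    (by rwa [List.length_map])
  refine ⟨fun i => shear (f i) t, ?_⟩
  rwa [← FreeGroup.map.mk, FreeGroup.mk_toWord, lift_map] at ht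

theorem stmt4_general (p : ℕ) [CharP R p] {ω : FreeGroup α} (hω : ω ≠ 1)
    (hlaw : ∀ g : α → SL(2, R), FreeGroup.lift g ω = 1) : p ≤ ω.norm := by
  by_contra! hlt
  have hcast : Set.InjOn (Nat.cast : ℕ → R) (Set.Iic ω.norm) :=
    (CharP.natCast_injOn_Iio R p).mono fun _ hm => (Set.mem_Iic.1 hm).trans_lt hlt
  obtain ⟨g, hg⟩ := exists_lift_ne_one_of_natCast_injOn hω hcast
  exact hg (hlaw g)

end Law

lemma log_two_mul_div_log_le {x : ℝ} (hx : 2 ≤ x) : Real.log 2 * x / Real.log x ≤ x := by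
  have hlog : Real.log 2 ≤ Real.log x := Real.log_le_log two_pos hx
  refine div_le_of_le_mul₀ (Real.log_nonneg (by linarith)) (by linarith) ?_
  rw [mul_comm]
  gcongr

/-- Fix k ≥ 1. There exists c > 0 such that for every prime p, every ω ≠ 1 in F_k
with ω(g₁,…,g_k) = 1 for all tuples in SL₂(ℤ/pℤ)^k has word length at least c·p/log p. -/
theorem stmt4 (k : ℕ) (hk : 1 ≤ k) :
    ∃ c : ℝ, 0 < c ∧
      ∀ (p : ℕ), p.Prime →
        ∀ ω : FreeGroup (Fin k), ω ≠ 1 →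
          (∀ g : Fin k → SL 2 p, FreeGroup.lift g ω = 1) →
          c * p / Real.log p ≤ (FreeGroup.norm ω : ℝ) :=
  ⟨Real.log 2, Real.log_pos one_lt_two, fun p hp _ hω hlaw =>
    have := Fact.mk hp
    (log_two_mul_div_log_le (mod_cast hp.two_le)).trans (mod_cast stmt4_general p hω hlaw)⟩
end

section
/- Fix an integer d ≥ 2. There exists a constant C > 0 such that for every prime p, the proportion of tuples S = (g₁, …, g_d) ∈ (SL₂(ℤ/pℤ))^d (with respect to the uniform measure) for which there exists a nontrivial word of length at most (1/2)·log_{2d−1}(p) whose evaluation at S equals id or −id is at most C·p^{−1/4}. -/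
open MeasureTheory

/-
Twist every generator `g i` by the symplectic transvection `u i t : v ↦ v + t ω(x i, v) x i`,
with `t` in the field. Each letter of a word evaluated at `(g i * u i t)` is then a rank-one
perturbation, linear in `t`. When the `2d` lines spanned by the vectors `x i` and `g i • x i`
are distinct, none of the pairings met along a reduced word vanishes, so a suitable matrix
coefficient of its value is a polynomial in `t` whose degree is exactly the length of the word,
and the word takes a given value for at most that many `t`. Twisting by a fixed `t` permutes the
tuples, so averaging over `t` bounds by (length)/q the probability that a word takes a given
value in general position. General position itself fails with probability `O(1/q)`, by the same
averaging, and a union bound over the words of length at most `L = ½ log_{2d-1} q` loses a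
factor of order `(2d)^L`, which is at most `q^{2/3}` because `(2d)³ ≤ (2d-1)⁴`.
-/

section Averaging

lemma card_mul_ncard_le_of_forall_ncard_mul_mem_le {G T : Type*} [Group G] [Finite G] [Finite T]
    (A : Set G) (σ : T → G) (k : ℕ) (h : ∀ x, {t | x * σ t ∈ A}.ncard ≤ k) :
    Nat.card T * A.ncard ≤ k * Nat.card G := by
  classical
  have := Fintype.ofFinite G
  have := Fintype.ofFinite T
  have translate_card (t : T) : {x | x * σ t ∈ A}.ncard = A.ncard :=
    Set.ncard_preimage_of_injective_subset_range (mul_left_injective (σ t)) fun a _ =>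
      (Group.mulRight_bijective (σ t)).surjective a
  calc Nat.card T * A.ncard = ∑ t : T, {x | x * σ t ∈ A}.ncard := by simp [translate_card]
    _ = ∑ x : G, {t | x * σ t ∈ A}.ncard := by
      simp only [Set.ncard_eq_toFinset_card', Set.toFinset_ofPred]
      exact (Finset.sum_card_bipartiteAbove_eq_sum_card_bipartiteBelow fun x t => x * σ t ∈ A).symm
    _ ≤ ∑ _x : G, k := Finset.sum_le_sum fun x _ => h x
    _ = k * Nat.card G := by simp [mul_comm]

end Averaging

section RankOnePencil

open Polynomial

variable {R V α : Type*} [CommRing R] [AddCommGroup V] [Module R V]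
  (A : α → Module.End R V) (φ : α → Module.Dual R V) (w : α → V)

/-- The rank-one perturbation `A a + t • (φ a ⊗ w a)` of the endomorphism `A a` attached to the
letter `a`. -/
def rankOnePencil (t : R) (a : α) : Module.End R V :=
  A a + t • (φ a).smulRight (w a)

/-- The matrix coefficient `t ↦ f (M a₁ ⋯ M aₙ u)` of a product of rank-one pencils
`M = rankOnePencil A φ w t`, as a polynomial in `t`. -/
noncomputable def pencilPolynomial (u : V) : List α → Module.Dual R V → R[X]
  | [], f => C (f u)
  | a :: l, f => pencilPolynomial u l (f ∘ₗ A a) + C (f (w a)) * X * pencilPolynomial u l (φ a)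

lemma eval_pencilPolynomial (u : V) (l : List α) (f : Module.Dual R V) (t : R) :
    (pencilPolynomial A φ w u l f).eval t = f ((l.map (rankOnePencil A φ w t)).prod u) := by
  induction l generalizing f with
  | nil => simp [pencilPolynomial]
  | cons a l ih =>
    simp only [pencilPolynomial, eval_add, eval_mul, eval_C, eval_X, ih, List.map_cons,
      List.prod_cons, Module.End.mul_apply, rankOnePencil, LinearMap.add_apply,
      LinearMap.smul_apply, LinearMap.smulRight_apply, LinearMap.comp_apply, map_add, map_smul,
      smul_eq_mul]
    ring

lemma degree_pencilPolynomial_le (u : V) (l : List α) (f : Module.Dual R V) :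
    (pencilPolynomial A φ w u l f).degree ≤ l.length := by
  induction l generalizing f with
  | nil => exact degree_C_le
  | cons a l ih =>
    rw [List.length_cons, Nat.cast_succ]
    refine degree_add_le_of_le (ih _) ?_ |>.trans (max_le ?_ le_rfl)
    · rw [add_comm]
      exact degree_mul_le_of_le (degree_C_mul_X_le _) (ih _)
    · exact_mod_cast l.length.le_succ

lemma degree_pencilPolynomial [NoZeroDivisors R] (a b : α) (l : List α)
    (hl : (a :: (l ++ [b])).IsChain fun a b => φ a (w b) ≠ 0) :
    (pencilPolynomial A φ w (w b) l (φ a)).degree = l.length := by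
  induction l generalizing a with
  | nil => exact degree_C (by simpa using hl)
  | cons c l ih =>
    rw [List.cons_append, List.isChain_cons_cons] at hl
    have : Nontrivial R := nontrivial_of_ne _ _ hl.1
    have degree_perturbation : (C (φ a (w c)) * X * pencilPolynomial A φ w (w b) l (φ c)).degree =
        ((l.length + 1 : ℕ) : WithBot ℕ) := by
      rw [degree_mul, degree_C_mul_X hl.1, ih c hl.2, add_comm, Nat.cast_succ]
    rw [pencilPolynomial, List.length_cons, degree_add_eq_right_of_degree_lt, degree_perturbation]
    rw [degree_perturbation]
    exact (degree_pencilPolynomial_le A φ w _ l _).trans_lt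
      (by exact_mod_cast l.length.lt_succ_self)

lemma encard_prod_rankOnePencil_eq_le [IsDomain R] (hself : ∀ a, φ a (w a) ≠ 0) {l : List α}
    (hne : l ≠ []) (hl : l.IsChain fun a b => φ a (w b) ≠ 0) (B : Module.End R V) :
    {t | (l.map (rankOnePencil A φ w t)).prod = B}.encard ≤ l.length := by
  classical
  set f := φ (l.head hne)
  set u := w (l.getLast hne)
  set q := pencilPolynomial A φ w u l f
  have degree_q : q.degree = l.length := by
    refine degree_pencilPolynomial A φ w _ _ l ?_
    rw [← List.cons_append]
    refine List.isChain_append.2 ⟨?_, List.isChain_singleton _, ?_⟩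
    · refine List.isChain_cons.2 ⟨?_, hl⟩
      simp [List.head?_eq_some_head hne, hself]
    · simp [List.getLast?_cons, List.getLast?_eq_some_getLast hne, hself]
  have degree_pos : 0 < q.degree := by
    rw [degree_q]
    exact_mod_cast List.length_pos_of_ne_nil hne
  have subset_roots : {t | (l.map (rankOnePencil A φ w t)).prod = B} ⊆
      ((q - C (f (B u))).roots.toFinset : Set R) := by
    rintro t rfl
    simp [mem_roots_sub_C degree_pos, q, eval_pencilPolynomial]
  have card_roots : (q - C (f (B u))).roots.toFinset.card ≤ l.length :=
    calc (q - C (f (B u))).roots.toFinset.card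
        ≤ (q - C (f (B u))).roots.card := Multiset.toFinset_card_le _
      _ ≤ q.natDegree := card_roots_sub_C' degree_pos
      _ = l.length := natDegree_eq_of_degree_eq_some degree_q
  refine (Set.encard_le_encard subset_roots).trans ?_
  rw [Set.encard_coe_eq_coe_finsetCard]
  exact_mod_cast card_roots

end RankOnePencil

section AreaForm

open Matrix MatrixGroups

variable {R : Type*} [CommRing R]

/-- The standard symplectic form `x₀ y₁ - x₁ y₀` on the plane. -/
def areaForm : LinearMap.BilinForm R (Fin 2 → R) :=
  Matrix.toBilin' !![0, 1; -1, 0]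

lemma areaForm_apply (x y : Fin 2 → R) : areaForm x y = x 0 * y 1 - x 1 * y 0 := by
  simp only [areaForm, toBilin'_apply, Fin.sum_univ_two, of_apply, cons_val', cons_val_fin_one,
    cons_val_zero, cons_val_one]
  ring

lemma areaForm_self (x : Fin 2 → R) : areaForm x x = 0 := by
  rw [areaForm_apply]
  ring

lemma areaForm_swap (x y : Fin 2 → R) : areaForm x y = -areaForm y x := by
  simp only [areaForm_apply]
  ring

lemma areaForm_smul_smul (g : SL(2, R)) (x y : Fin 2 → R) :
    areaForm (g • x) (g • y) = areaForm x y := by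
  have hg := g.det_coe
  rw [det_fin_two] at hg
  rw [Matrix.SpecialLinearGroup.smul_def, Matrix.SpecialLinearGroup.smul_def]
  simp only [areaForm_apply, smul_eq_mulVec, mulVec, dotProduct, Fin.sum_univ_two]
  linear_combination (x 0 * y 1 - x 1 * y 0) * hg

lemma exists_areaForm_ne_zero {x : Fin 2 → R} (hx : x ≠ 0) : ∃ z, areaForm z x ≠ 0 := by
  contrapose! hx
  ext k
  fin_cases k
  · simpa [areaForm_apply] using hx ![0, 1]
  · simpa [areaForm_apply] using hx ![1, 0]

lemma areaForm_smul_eq_add (x y v : Fin 2 → R) :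
    areaForm x y • v = areaForm v y • x + areaForm x v • y := by
  ext k
  simp only [areaForm_apply, Pi.smul_apply, Pi.add_apply, smul_eq_mul]
  fin_cases k <;> simp only [Fin.zero_eta, Fin.mk_one] <;> ring

lemma eq_zero_of_areaForm_eq_zero [NoZeroDivisors R] {x y v : Fin 2 → R} (hxy : areaForm x y ≠ 0)
    (hxv : areaForm x v = 0) (hyv : areaForm y v = 0) : v = 0 := by
  have := areaForm_smul_eq_add x y v
  rw [areaForm_swap v, hxv, hyv, neg_zero, zero_smul, zero_smul, add_zero] at this
  exact (smul_eq_zero_iff_right hxy).1 this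

/-- The symplectic transvection `v ↦ v + t ω(x, v) x`, where `ω` is `areaForm`. -/
def symplecticTransvection (x : Fin 2 → R) (t : R) : SL(2, R) :=
  ⟨!![1 - t * x 0 * x 1, t * x 0 ^ 2; -t * x 1 ^ 2, 1 + t * x 0 * x 1], by
    rw [det_fin_two_of]; ring⟩

lemma symplecticTransvection_smul (x v : Fin 2 → R) (t : R) :
    symplecticTransvection x t • v = v + (t * areaForm x v) • x := by
  rw [Matrix.SpecialLinearGroup.smul_def, areaForm_apply]
  ext k
  simp only [symplecticTransvection, smul_eq_mulVec, mulVec, dotProduct, Fin.sum_univ_two, of_apply,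
    Pi.smul_apply, Pi.add_apply, smul_eq_mul]
  fin_cases k <;>
    simp only [Fin.zero_eta, Fin.mk_one, cons_val', cons_val_fin_one, cons_val_zero,
      cons_val_one] <;>
    ring

lemma symplecticTransvection_inv (x : Fin 2 → R) (t : R) :
    (symplecticTransvection x t)⁻¹ = symplecticTransvection x (-t) := by
  rw [Matrix.SpecialLinearGroup.SL2_inv_expl]
  ext i j
  fin_cases i <;> fin_cases j <;> simp [symplecticTransvection, sub_eq_add_neg]

end AreaForm

section GeneralPosition

open Matrix MatrixGroups

variable {ι R : Type*} [CommRing R] (x : ι → Fin 2 → R) (S : ι → SL(2, R))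

/-- The direction attached to the source of a letter: `x i` for the generator `i` and `S i • x i`
for its inverse. -/
def sourceAxis (a : ι × Bool) : Fin 2 → R :=
  bif a.2 then x a.1 else S a.1 • x a.1

/-- The direction attached to the target of a letter, which is up to sign the source of the inverse
letter. The sign makes `areaForm (sourceAxis x S a)` and `targetAxis x S a` the two factors of the
rank-one term in `toModuleEnd_mul_symplecticTransvection`. -/
def targetAxis (a : ι × Bool) : Fin 2 → R :=
  bif a.2 then S a.1 • x a.1 else -x a.1

/-- The vectors `x i` and `S i • x i` span pairwise distinct lines. -/
def InGeneralPosition : Prop :=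
  Pairwise fun a b => areaForm (sourceAxis x S a) (sourceAxis x S b) ≠ 0

lemma sourceAxis_mul_symplecticTransvection (t : R) :
    sourceAxis x (fun i => S i * symplecticTransvection (x i) t) = sourceAxis x S := by
  ext1 ⟨i, _ | _⟩ <;>
    simp [sourceAxis, mul_smul, symplecticTransvection_smul, areaForm_self]

lemma sourceAxis_ne_zero (hx : ∀ i, x i ≠ 0) (a : ι × Bool) : sourceAxis x S a ≠ 0 := by
  rcases a with ⟨i, _ | _⟩ <;> simp [sourceAxis, smul_eq_zero_iff_eq, hx]

lemma sourceAxis_mul_mulSingle [DecidableEq ι] {i : ι} {a : ι × Bool} (ha : a ≠ (i, false))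
    (g : SL(2, R)) : sourceAxis x (S * Pi.mulSingle i g) a = sourceAxis x S a := by
  rcases a with ⟨j, _ | _⟩
  · have : j ≠ i := fun h => ha (h ▸ rfl)
    simp [sourceAxis, this]
  · rfl

lemma inGeneralPosition_mul_symplecticTransvection_iff (t : R) :
    InGeneralPosition x (fun i => S i * symplecticTransvection (x i) t) ↔
      InGeneralPosition x S := by
  rw [InGeneralPosition, sourceAxis_mul_symplecticTransvection, InGeneralPosition]

variable {x S} in
lemma InGeneralPosition.areaForm_sourceAxis_targetAxis_ne_zero (h : InGeneralPosition x S)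
    {a b : ι × Bool} (hab : a.1 = b.1 → a.2 = b.2) :
    areaForm (sourceAxis x S a) (targetAxis x S b) ≠ 0 := by
  have ne_inverse : a ≠ (b.1, !b.2) := by
    rintro rfl
    simp at hab
  have := h ne_inverse
  rcases b with ⟨i, _ | _⟩ <;> simpa [sourceAxis, targetAxis] using this

lemma toModuleEnd_mul_symplecticTransvection (t : R) (a : ι × Bool) :
    DistribMulAction.toModuleEnd R (Fin 2 → R)
        (bif a.2 then S a.1 * symplecticTransvection (x a.1) t
          else (S a.1 * symplecticTransvection (x a.1) t)⁻¹) =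
      rankOnePencil
        (fun a => DistribMulAction.toModuleEnd R (Fin 2 → R) (bif a.2 then S a.1 else (S a.1)⁻¹))
        (fun a => areaForm (sourceAxis x S a)) (targetAxis x S) t a := by
  refine LinearMap.ext fun v => ?_
  rcases a with ⟨i, _ | _⟩
  · have pull_back : areaForm (x i) ((S i)⁻¹ • v) = areaForm (S i • x i) v := by
      rw [← areaForm_smul_smul (S i), smul_inv_smul]
    simp [rankOnePencil, sourceAxis, targetAxis, mul_smul, symplecticTransvection_inv,
      symplecticTransvection_smul, pull_back]
  · simp [rankOnePencil, sourceAxis, targetAxis, mul_smul, symplecticTransvection_smul,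
      smul_comm (S i)]

variable {x S} in
lemma InGeneralPosition.encard_lift_mul_symplecticTransvection_eq_le [IsDomain R] [DecidableEq ι]
    (h : InGeneralPosition x S) {g : FreeGroup ι} (hg : g ≠ 1) (b : SL(2, R)) :
    {t | FreeGroup.lift (fun i => S i * symplecticTransvection (x i) t) g = b}.encard ≤
      g.norm := by
  have self_ne_zero (a : ι × Bool) : areaForm (sourceAxis x S a) (targetAxis x S a) ≠ 0 :=
    h.areaForm_sourceAxis_targetAxis_ne_zero fun _ => rfl
  have chain : g.toWord.IsChain fun a b => areaForm (sourceAxis x S a) (targetAxis x S b) ≠ 0 :=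
    FreeGroup.isReduced_toWord.imp fun _ _ => h.areaForm_sourceAxis_targetAxis_ne_zero
  refine le_trans (Set.encard_le_encard ?_) <| encard_prod_rankOnePencil_eq_le
    (fun a => DistribMulAction.toModuleEnd R (Fin 2 → R) (bif a.2 then S a.1 else (S a.1)⁻¹))
    (fun a => areaForm (sourceAxis x S a)) (targetAxis x S) self_ne_zero
    (mt FreeGroup.toWord_eq_nil_iff.1 hg) chain (DistribMulAction.toModuleEnd R (Fin 2 → R) b)
  rintro t rfl
  nth_rw 2 [← FreeGroup.mk_toWord (x := g)]
  rw [FreeGroup.lift_mk, map_list_prod, List.map_map]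
  congr 1
  exact List.map_congr_left fun a _ => (toModuleEnd_mul_symplecticTransvection x S t a).symm

end GeneralPosition

section Words

lemma wordProd_eq_mk {d m : ℕ} (w : Fin m → Fin d × Bool) :
    wordProd w = FreeGroup.mk (List.ofFn w) := by
  rw [wordProd, ← FreeGroup.lift_of_apply (FreeGroup.mk (List.ofFn w)), FreeGroup.lift_mk,
    List.map_ofFn]
  simp only [Function.comp_def, Bool.cond_eq_ite]

lemma norm_wordProd_le {d m : ℕ} (w : Fin m → Fin d × Bool) : (wordProd w).norm ≤ m := by
  rw [wordProd_eq_mk]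
  exact FreeGroup.norm_mk_le.trans_eq List.length_ofFn

lemma wordEval_eq_lift {G : Type*} [Group G] {d m : ℕ} (S : Fin d → G) (w : Fin m → Fin d × Bool) :
    wordEval S w = FreeGroup.lift S (wordProd w) := by
  rw [wordProd_eq_mk, FreeGroup.lift_mk, List.map_ofFn, wordEval]
  simp only [Function.comp_def, Bool.cond_eq_ite]

/-- The tuples at which some nontrivial word of length at most `L` takes a value in `B`. -/
def shortWordTuples {G : Type*} [Group G] (d L : ℕ) (B : Set G) : Set (Fin d → G) :=
  {S | ∃ m ≤ L, ∃ w : Fin m → Fin d × Bool, wordProd w ≠ 1 ∧ wordEval S w ∈ B}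

end Words

section Counting

open Matrix MatrixGroups

lemma mul_ncard_le_of_subset_biUnion {α β : Type*} [Finite β] {B : Set β} (s : Finset α)
    (A : α → Set β) (hB : B ⊆ ⋃ a ∈ s, A a) {q k : ℕ} (h : ∀ a ∈ s, q * (A a).ncard ≤ k) :
    q * B.ncard ≤ s.card * k :=
  calc q * B.ncard ≤ q * ∑ a ∈ s, (A a).ncard := by
        gcongr
        exact (Set.ncard_le_ncard hB).trans (s.set_ncard_biUnion_le A)
    _ = ∑ a ∈ s, q * (A a).ncard := Finset.mul_sum ..
    _ ≤ s.card * k := by simpa using Finset.sum_le_card_nsmul s _ k h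

variable {ι F : Type*} [Field F] [Finite F] {x : ι → Fin 2 → F}

lemma card_mul_ncard_inGeneralPosition_lift_eq_le [Finite ι] [DecidableEq ι] {g : FreeGroup ι}
    (hg : g ≠ 1) (b : SL(2, F)) :
    Nat.card F * {S | InGeneralPosition x S ∧ FreeGroup.lift S g = b}.ncard ≤
      g.norm * Nat.card (ι → SL(2, F)) := by
  refine card_mul_ncard_le_of_forall_ncard_mul_mem_le _
    (fun t i => symplecticTransvection (x i) t) _ fun S => ?_
  simp only [Set.mem_ofPred_eq, Pi.mul_def, inGeneralPosition_mul_symplecticTransvection_iff]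
  by_cases hS : InGeneralPosition x S
  · have := hS.encard_lift_mul_symplecticTransvection_eq_le hg b
    rw [← (Set.toFinite _).cast_ncard_eq] at this
    simpa only [hS, true_and] using ENat.natCast_le_natCast.1 this
  · simp [hS]

lemma card_mul_ncard_areaForm_smul_eq_zero_le [Finite ι] [DecidableEq ι] (i : ι) {u : Fin 2 → F}
    (hu : u ≠ 0) {y : (ι → SL(2, F)) → Fin 2 → F} (hy : ∀ S, y S ≠ 0)
    (hyi : ∀ S g, y (S * Pi.mulSingle i g) = y S) :
    Nat.card F * {S | areaForm (S i • u) (y S) = 0}.ncard ≤ Nat.card (ι → SL(2, F)) := by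
  obtain ⟨z, hz⟩ := exists_areaForm_ne_zero hu
  rw [← one_mul (Nat.card (ι → SL(2, F)))]
  refine card_mul_ncard_le_of_forall_ncard_mul_mem_le _
    (fun t => Pi.mulSingle i (symplecticTransvection z t)) 1 fun S => ?_
  have expand (t : F) : areaForm ((S * Pi.mulSingle i (symplecticTransvection z t) :) i • u)
      (y (S * Pi.mulSingle i (symplecticTransvection z t))) =
        areaForm (S i • u) (y S) + t * areaForm z u * areaForm (S i • z) (y S) := by
    simp [hyi, mul_smul, symplecticTransvection_smul, smul_comm (S i), mul_assoc]
  refine (Set.ncard_le_one_iff (Set.toFinite _)).2 fun {s t} hs ht => ?_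
  simp only [Set.mem_ofPred_eq, expand] at hs ht
  by_contra hst
  have areaForm_z : areaForm (S i • z) (y S) = 0 := by
    have : (s - t) * areaForm z u * areaForm (S i • z) (y S) = 0 := by linear_combination hs - ht
    simpa [sub_ne_zero.2 hst, hz] using this
  have areaForm_u : areaForm (S i • u) (y S) = 0 := by simpa [areaForm_z] using hs
  exact hy S <| eq_zero_of_areaForm_eq_zero (by rwa [areaForm_smul_smul]) areaForm_z areaForm_u

lemma card_mul_ncard_areaForm_sourceAxis_eq_zero_le [Finite ι] (h0 : ∀ i, x i ≠ 0)
    (hx : Pairwise fun i j => areaForm (x i) (x j) ≠ 0) {a b : ι × Bool} (hab : a ≠ b) :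
    Nat.card F * {S : ι → SL(2, F) |
        areaForm (sourceAxis x S a) (sourceAxis x S b) = 0}.ncard ≤
      Nat.card (ι → SL(2, F)) := by
  classical
  have of_inverse (i : ι) {b : ι × Bool} (hb : b ≠ (i, false)) :=
    card_mul_ncard_areaForm_smul_eq_zero_le i (h0 i) (fun S => sourceAxis_ne_zero x S h0 b)
      (fun S => sourceAxis_mul_mulSingle x S hb)
  rcases a with ⟨i, _ | _⟩
  · exact of_inverse i hab.symm
  rcases b with ⟨j, _ | _⟩
  · simp_rw [areaForm_swap (sourceAxis x _ (i, true)), neg_eq_zero]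
    exact of_inverse j hab
  · have hij : i ≠ j := fun h => hab (h ▸ rfl)
    simp [sourceAxis, hx hij]

lemma card_mul_ncard_not_inGeneralPosition_le [Finite ι] (h0 : ∀ i, x i ≠ 0)
    (hx : Pairwise fun i j => areaForm (x i) (x j) ≠ 0) :
    Nat.card F * {S : ι → SL(2, F) | ¬ InGeneralPosition x S}.ncard ≤
      (2 * Nat.card ι) ^ 2 * Nat.card (ι → SL(2, F)) := by
  classical
  have := Fintype.ofFinite ι
  have subset_union : {S : ι → SL(2, F) | ¬ InGeneralPosition x S} ⊆
      ⋃ p ∈ (Finset.univ : Finset (ι × Bool)).offDiag,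
        {S | areaForm (sourceAxis x S p.1) (sourceAxis x S p.2) = 0} := by
    intro S hS
    simp only [InGeneralPosition, Pairwise, Set.mem_ofPred_eq] at hS
    push Not at hS
    obtain ⟨a, b, hab, h⟩ := hS
    exact Set.mem_biUnion (x := (a, b)) (by simp [hab]) h
  have card_offDiag_le : (Finset.univ : Finset (ι × Bool)).offDiag.card ≤ (2 * Nat.card ι) ^ 2 := by
    rw [Finset.offDiag_card]
    exact (Nat.sub_le _ _).trans_eq (by simp; ring)
  refine (mul_ncard_le_of_subset_biUnion _ _ subset_union fun p hp => ?_).trans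
    (Nat.mul_le_mul_right _ card_offDiag_le)
  exact card_mul_ncard_areaForm_sourceAxis_eq_zero_le h0 hx (Finset.mem_offDiag.1 hp).2.2

lemma card_mul_ncard_inGeneralPosition_wordEval_eq_le {d m : ℕ} {x : Fin d → Fin 2 → F}
    {w : Fin m → Fin d × Bool} (hw : wordProd w ≠ 1) (b : SL(2, F)) :
    Nat.card F * {S | InGeneralPosition x S ∧ wordEval S w = b}.ncard ≤
      m * Nat.card (Fin d → SL(2, F)) := by
  simp only [wordEval_eq_lift]
  exact (card_mul_ncard_inGeneralPosition_lift_eq_le hw b).trans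
    (Nat.mul_le_mul_right _ (norm_wordProd_le w))

lemma card_mul_ncard_inGeneralPosition_shortWordTuples_le (d L : ℕ) (x : Fin d → Fin 2 → F)
    (B : Finset SL(2, F)) :
    Nat.card F * {S | InGeneralPosition x S ∧ S ∈ shortWordTuples d L B}.ncard ≤
      (∑ m ∈ Finset.range (L + 1), (2 * d) ^ m) * B.card * (L * Nat.card (Fin d → SL(2, F))) := by
  classical
  set words : Finset (Σ m, Fin m → Fin d × Bool) :=
    (Finset.range (L + 1)).sigma fun _ => Finset.univ
  set relations : Finset ((Σ m, Fin m → Fin d × Bool) × SL(2, F)) :=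
    {w ∈ words | wordProd w.2 ≠ 1} ×ˢ B
  have subset_union : {S | InGeneralPosition x S ∧ S ∈ shortWordTuples d L B} ⊆
      ⋃ p ∈ relations, {S | InGeneralPosition x S ∧ wordEval S p.1.2 = p.2} := by
    rintro S ⟨hS, m, hm, w, hw, hB⟩
    exact Set.mem_biUnion (x := (⟨m, w⟩, wordEval S w))
      (by simp [relations, words, hm, hw, Finset.mem_coe.1 hB]) ⟨hS, rfl⟩
  have card_relations_le : relations.card ≤ (∑ m ∈ Finset.range (L + 1), (2 * d) ^ m) * B.card := by
    rw [Finset.card_product]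
    gcongr
    refine (Finset.card_filter_le _ _).trans_eq ?_
    simp [words, Finset.card_sigma, mul_comm]
  refine (mul_ncard_le_of_subset_biUnion (k := L * Nat.card (Fin d → SL(2, F))) _ _ subset_union
    ?_).trans (Nat.mul_le_mul_right _ card_relations_le)
  rintro ⟨⟨m, w⟩, b⟩ hp
  simp only [relations, words, Finset.mem_product, Finset.mem_filter, Finset.mem_sigma,
    Finset.mem_range_succ_iff] at hp
  exact (card_mul_ncard_inGeneralPosition_wordEval_eq_le hp.1.2 b).trans
    (Nat.mul_le_mul_right _ hp.1.1.1)

lemma card_mul_ncard_shortWordTuples_le {d : ℕ} (hd : d ≤ Nat.card F) (L : ℕ)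
    (B : Finset SL(2, F)) :
    Nat.card F * (shortWordTuples d L (B : Set SL(2, F))).ncard ≤
      ((2 * d) ^ 2 + (∑ m ∈ Finset.range (L + 1), (2 * d) ^ m) * B.card * L) *
        Nat.card (Fin d → SL(2, F)) := by
  let e : Fin d ↪ F := (Fin.castLEEmb hd).trans (Finite.equivFin F).symm.toEmbedding
  set x : Fin d → Fin 2 → F := fun i => ![1, e i]
  have x_ne_zero (i : Fin d) : x i ≠ 0 := fun h => by simpa [x] using congrFun h 0
  have x_pairwise : Pairwise fun i j => areaForm (x i) (x j) ≠ 0 := fun i j hij => by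
    simpa [x, areaForm_apply, sub_eq_zero] using hij.symm
  calc Nat.card F * (shortWordTuples d L (B : Set SL(2, F))).ncard
      ≤ Nat.card F * ({S | ¬ InGeneralPosition x S}.ncard +
          {S | InGeneralPosition x S ∧ S ∈ shortWordTuples d L (B : Set SL(2, F))}.ncard) := by
        gcongr
        refine (Set.ncard_le_ncard fun S hS => ?_).trans (Set.ncard_union_le _ _)
        exact (em' (InGeneralPosition x S)).imp_right fun h => ⟨h, hS⟩
    _ ≤ (2 * d) ^ 2 * Nat.card (Fin d → SL(2, F)) +
          (∑ m ∈ Finset.range (L + 1), (2 * d) ^ m) * B.card *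
            (L * Nat.card (Fin d → SL(2, F))) := by
        rw [mul_add]
        refine add_le_add ?_ (card_mul_ncard_inGeneralPosition_shortWordTuples_le d L x B)
        simpa using card_mul_ncard_not_inGeneralPosition_le x_ne_zero x_pairwise
    _ = _ := by ring

end Counting

section Asymptotics

lemma natCast_le_rpow_of_le_logb {b q : ℝ} (hb : 3 ≤ b) (hq : 1 ≤ q) {L : ℕ}
    (hL : (L : ℝ) ≤ 1 / 2 * Real.logb b q) : (L : ℝ) ≤ 6 * q ^ (1 / 12 : ℝ) := by
  have one_le_log : 1 ≤ Real.log b := by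
    rw [Real.le_log_iff_exp_le (by linarith)]
    linarith [Real.exp_one_lt_three]
  have logb_le : Real.logb b q ≤ Real.log q := div_le_self (Real.log_nonneg hq) one_le_log
  have log_le := Real.log_le_rpow_div (zero_le_one.trans hq) (by norm_num : (0 : ℝ) < 1 / 12)
  linarith

lemma add_one_pow_le_rpow_of_le_logb {b q : ℝ} (hb : 3 ≤ b) (hq : 1 ≤ q) {L : ℕ}
    (hL : (L : ℝ) ≤ 1 / 2 * Real.logb b q) : (b + 1) ^ L ≤ q ^ (2 / 3 : ℝ) := by
  have pow_le : b ^ (2 * L) ≤ q := by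
    rw [← Real.rpow_natCast, ← Real.le_logb_iff_rpow_le (by linarith) (by linarith)]
    push_cast
    linarith
  refine le_of_pow_le_pow_left₀ three_ne_zero (by positivity) ?_
  calc ((b + 1) ^ L) ^ 3 = ((b + 1) ^ 3) ^ L := pow_right_comm ..
    _ ≤ (b ^ 4) ^ L := by
      gcongr
      nlinarith [mul_nonneg (sq_nonneg b) (sub_nonneg.2 hb)]
    _ = (b ^ (2 * L)) ^ 2 := by ring
    _ ≤ q ^ 2 := by gcongr
    _ = (q ^ (2 / 3 : ℝ)) ^ 3 := by
      rw [← Real.rpow_natCast (q ^ _), ← Real.rpow_mul (zero_le_one.trans hq)]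
      norm_num

lemma sum_range_two_mul_pow_mul_le {d : ℕ} (hd : 2 ≤ d) {q : ℝ} (hq : 1 ≤ q) {L : ℕ}
    (hL : (L : ℝ) ≤ 1 / 2 * Real.logb (2 * d - 1) q) :
    (∑ m ∈ Finset.range (L + 1), (2 * d : ℝ) ^ m) * L ≤ 12 * d * q ^ (3 / 4 : ℝ) := by
  have three_le : (3 : ℝ) ≤ 2 * d - 1 := by
    have : (2 : ℝ) ≤ d := by exact_mod_cast hd
    linarith
  have sum_le : ∑ m ∈ Finset.range (L + 1), (2 * d : ℝ) ^ m ≤ (2 * d) ^ (L + 1) := by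
    exact_mod_cast (Nat.geomSum_lt (by lia) fun _ => Finset.mem_range.1).le
  have pow_le := add_one_pow_le_rpow_of_le_logb three_le hq hL
  rw [sub_add_cancel] at pow_le
  calc (∑ m ∈ Finset.range (L + 1), (2 * d : ℝ) ^ m) * L ≤ (2 * d) ^ (L + 1) * L := by gcongr
    _ = 2 * d * ((2 * d) ^ L * L) := by ring
    _ ≤ 2 * d * (q ^ (2 / 3 : ℝ) * (6 * q ^ (1 / 12 : ℝ))) := by
      gcongr
      exact natCast_le_rpow_of_le_logb three_le hq hL
    _ = 12 * d * (q ^ (2 / 3 : ℝ) * q ^ (1 / 12 : ℝ)) := by ring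
    _ = 12 * d * q ^ (3 / 4 : ℝ) := by
      rw [← Real.rpow_add (zero_lt_one.trans_le hq)]
      norm_num

end Asymptotics

section Main

open Matrix MatrixGroups

variable {F : Type*} [Field F] [Finite F]

lemma card_mul_ncard_shortWordTuples_le_rpow {d : ℕ} (hd : 2 ≤ d) {L : ℕ}
    (hL : (L : ℝ) ≤ 1 / 2 * Real.logb (2 * d - 1) (Nat.card F)) (B : Finset SL(2, F)) :
    (Nat.card F : ℝ) * (shortWordTuples d L (B : Set SL(2, F))).ncard ≤
      (4 * d ^ 2 + 12 * d * B.card) * (Nat.card F : ℝ) ^ (3 / 4 : ℝ) *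
        Nat.card (Fin d → SL(2, F)) := by
  have one_le_card : (1 : ℝ) ≤ Nat.card F := by exact_mod_cast Nat.card_pos (α := F)
  rcases le_or_gt d (Nat.card F) with hdF | hdF
  · have count : (Nat.card F : ℝ) * (shortWordTuples d L (B : Set SL(2, F))).ncard ≤
        ((2 * d) ^ 2 + B.card * ((∑ m ∈ Finset.range (L + 1), (2 * d : ℝ) ^ m) * L)) *
          Nat.card (Fin d → SL(2, F)) := by
      have := card_mul_ncard_shortWordTuples_le hdF L B
      rw [mul_right_comm, mul_comm _ B.card] at this
      exact_mod_cast this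
    refine count.trans (mul_le_mul_of_nonneg_right ?_ (Nat.cast_nonneg _))
    calc (2 * d : ℝ) ^ 2 + B.card * ((∑ m ∈ Finset.range (L + 1), (2 * d : ℝ) ^ m) * L)
        ≤ (2 * d) ^ 2 * (Nat.card F : ℝ) ^ (3 / 4 : ℝ) +
            B.card * (12 * d * (Nat.card F : ℝ) ^ (3 / 4 : ℝ)) := by
          refine add_le_add ?_ (mul_le_mul_of_nonneg_left
            (sum_range_two_mul_pow_mul_le hd one_le_card hL) (Nat.cast_nonneg _))
          exact le_mul_of_one_le_right (by positivity)
            (Real.one_le_rpow one_le_card (by norm_num))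
      _ = _ := by ring
  · have card_le : (Nat.card F : ℝ) ≤ d * (Nat.card F : ℝ) ^ (3 / 4 : ℝ) :=
      calc (Nat.card F : ℝ) = (Nat.card F : ℝ) ^ (1 / 4 : ℝ) * (Nat.card F : ℝ) ^ (3 / 4 : ℝ) := by
            rw [← Real.rpow_add (by positivity)]
            norm_num
        _ ≤ d * (Nat.card F : ℝ) ^ (3 / 4 : ℝ) := by
          gcongr
          refine (Real.rpow_le_self_of_one_le one_le_card (by norm_num)).trans ?_
          exact_mod_cast hdF.le
    have coefficient_le : (d : ℝ) ≤ 4 * d ^ 2 + 12 * d * B.card := by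
      exact_mod_cast (by nlinarith : d ≤ 4 * d ^ 2 + 12 * d * B.card)
    gcongr
    · exact card_le.trans (by gcongr)
    · exact Set.ncard_le_card _

lemma ncard_shortWordTuples_div_le {d : ℕ} (hd : 2 ≤ d) {L : ℕ}
    (hL : (L : ℝ) ≤ 1 / 2 * Real.logb (2 * d - 1) (Nat.card F)) (B : Finset SL(2, F)) :
    ((shortWordTuples d L (B : Set SL(2, F))).ncard : ℝ) / Nat.card (Fin d → SL(2, F)) ≤
      (4 * d ^ 2 + 12 * d * B.card) * (Nat.card F : ℝ) ^ (-(1 / 4) : ℝ) := by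
  have card_pos : (0 : ℝ) < Nat.card F := by exact_mod_cast Nat.card_pos
  have rpow_eq : (Nat.card F : ℝ) ^ (3 / 4 : ℝ) = Nat.card F * Nat.card F ^ (-(1 / 4) : ℝ) := by
    rw [← Real.rpow_one_add' card_pos.le (by norm_num)]
    norm_num
  rw [div_le_iff₀ (by exact_mod_cast Nat.card_pos)]
  refine le_of_mul_le_mul_left ?_ card_pos
  calc _ ≤ _ := card_mul_ncard_shortWordTuples_le_rpow hd hL B
    _ = _ := by rw [rpow_eq]; ring

theorem stmt5_general (d : ℕ) (hd : 2 ≤ d) :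
    ∃ C : ℝ, 0 < C ∧
      ∀ (F : Type*) [Field F] [Finite F],
        (Nat.card {S : Fin d → SL(2, F) //
            ∃ m : ℕ, (m : ℝ) ≤ (1/2) * Real.logb (2 * d - 1) (Nat.card F) ∧
              ∃ w : Fin m → Fin d × Bool, wordProd w ≠ 1 ∧
                (wordEval S w = 1 ∨
                  (↑(wordEval S w) : Matrix (Fin 2) (Fin 2) F) = -1)} : ℝ) /
          (Nat.card (Fin d → SL(2, F)) : ℝ) ≤ C * (Nat.card F : ℝ) ^ (-(1/4 : ℝ)) := by
  classical
  refine ⟨4 * d ^ 2 + 12 * d * 2, by positivity, fun F _ _ => ?_⟩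
  set B : Finset SL(2, F) := {1, -1}
  have one_lt : (1 : ℝ) < 2 * d - 1 := by
    have : (2 : ℝ) ≤ d := by exact_mod_cast hd
    linarith
  have radius_nonneg : 0 ≤ 1 / 2 * Real.logb (2 * d - 1) (Nat.card F) :=
    mul_nonneg (by norm_num) (Real.logb_nonneg one_lt (by exact_mod_cast Nat.card_pos (α := F)))
  calc _ ≤ ((shortWordTuples d _ (B : Set SL(2, F))).ncard : ℝ) / Nat.card (Fin d → SL(2, F)) := by
        gcongr
        refine Set.ncard_le_ncard fun S ⟨m, hm, w, hw, hS⟩ => ⟨m, Nat.le_floor hm, w, hw, ?_⟩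
        have eq_or_eq : wordEval S w = 1 ∨ wordEval S w = -1 := hS.imp_right Subtype.ext
        simpa [B] using eq_or_eq
    _ ≤ _ := ncard_shortWordTuples_div_le hd (Nat.floor_le radius_nonneg) B
    _ ≤ (4 * d ^ 2 + 12 * d * 2) * (Nat.card F : ℝ) ^ (-(1 / 4) : ℝ) := by
      gcongr
      exact_mod_cast Finset.card_le_two

end Main

/-- Fix d ≥ 2. There exists C > 0 such that for every prime p, the proportion of
tuples S ∈ SL₂(ℤ/pℤ)^d for which some nontrivial word of length at most (1/2)·log_{2d−1}(p)
evaluates at S to id or −id is at most C·p^{−1/4}. -/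
theorem stmt5 (d : ℕ) (hd : 2 ≤ d) :
    ∃ C : ℝ, 0 < C ∧
      ∀ (p : ℕ), p.Prime →
        (Nat.card {S : Fin d → SL 2 p //
            ∃ m : ℕ, (m : ℝ) ≤ (1/2) * Real.logb (2 * d - 1) p ∧
              ∃ w : Fin m → Fin d × Bool, wordProd w ≠ 1 ∧
                (wordEval S w = 1 ∨
                  (↑(wordEval S w) : Matrix (Fin 2) (Fin 2) (ZMod p)) = -1)} : ℝ) /
          (Nat.card (Fin d → SL 2 p) : ℝ) ≤ C * (p : ℝ) ^ (-(1/4 : ℝ)) := by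
  obtain ⟨C, hC, h⟩ := stmt5_general d hd
  refine ⟨C, hC, fun p hp => ?_⟩
  have : Fact p.Prime := ⟨hp⟩
  simpa only [Nat.card_zmod] using h (ZMod p)
end

section
/- For every integer d ≥ 1 and every integer m ≥ 0, the m-th moment ∫ x^m f_{2d}(x) dx of the Kesten–McKay law with parameter 2d equals N(d, m), the number of trivial words of length m in d letters. -/
open MeasureTheory

/-!
The spherical polynomials `φ₀ = 1`, `φ₁ = X / (q + 1)`, `q φₙ₊₂ = X φₙ₊₁ - φₙ` of the
`(q + 1)`-regular tree are built so that, for `q = 2d - 1`, summing `φ_{|s g|}` over the `2d`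
letters `s` gives `X φ_{|g|}`: exactly one letter shortens a nontrivial reduced word `g`, the others
lengthen it. Iterating from `g = 1` yields `X ^ m = ∑ φ_{|w|}` over all words `w` of length `m`.
It remains to see that the Kesten–McKay law gives `φₙ` integral `1` for `n = 0` and `0` otherwise,
so that integration counts the words with `|w| = 0`.

After substituting `x = 2 √q cos θ`, the integral of `φₙ` is a multiple of that of
`sin θ (q sin ((n + 1) θ) - sin ((n - 1) θ)) / |q - e ^ (2 i θ)| ^ 2`. As a sequence in `n ≥ 1`
these integrals are bounded and are multiplied by `q` when `n` grows by `2`, so they vanish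
if `q > 1`; for `q = 1` the integrand is `cos (n θ) / 2`.
-/

section

open Polynomial Real

section FreeGroup

variable {α : Type*} [DecidableEq α]

theorem norm_mk_singleton_mul (s : α × Bool) (g : FreeGroup α) :
    (FreeGroup.mk [s] * g).norm =
      if g.toWord.head? = some (s.1, !s.2) then g.norm - 1 else g.norm + 1 := by
  have hword : (FreeGroup.mk [s] * g).toWord = FreeGroup.reduce (s :: g.toWord) := by
    rw [FreeGroup.toWord_mul, FreeGroup.toWord_mk, FreeGroup.reduce_singleton,
      List.singleton_append]
  rw [FreeGroup.norm, FreeGroup.norm, hword, FreeGroup.reduce.cons, FreeGroup.reduce_toWord]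
  rcases s with ⟨a, b⟩
  rcases g.toWord with _ | ⟨⟨a', b'⟩, tl⟩
  · rfl
  · have hcancel : (a', b') = (a, !b) ↔ a = a' ∧ b = !b' := by
      cases b <;> cases b' <;> simp [eq_comm]
    simp only [List.head?_cons, Option.some.injEq, hcancel]
    split_ifs <;> rfl

variable [Fintype α] {M : Type*} [AddCommMonoid M]

theorem sum_norm_mk_singleton_mul_one (f : ℕ → M) :
    ∑ s : α × Bool, f (FreeGroup.mk [s] * 1).norm = (2 * Fintype.card α) • f 1 := by
  simp only [norm_mk_singleton_mul, FreeGroup.toWord_one, FreeGroup.norm_one, List.head?_nil,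
    reduceCtorEq, if_false, zero_add, Finset.sum_const, Finset.card_univ, Fintype.card_prod,
    Fintype.card_bool, mul_comm]

theorem sum_norm_mk_singleton_mul_of_norm_eq_succ (f : ℕ → M) {g : FreeGroup α} {n : ℕ}
    (hg : g.norm = n + 1) :
    ∑ s : α × Bool, f (FreeGroup.mk [s] * g).norm =
      f n + (2 * Fintype.card α - 1) • f (n + 2) := by
  obtain ⟨y, tl, hy⟩ := List.exists_cons_of_length_eq_add_one hg
  have hnorm (s : α × Bool) :
      (FreeGroup.mk [s] * g).norm = if s = (y.1, !y.2) then n else n + 2 := by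
    have hs : y = (s.1, !s.2) ↔ s = (y.1, !y.2) := by
      constructor <;> rintro rfl <;> simp
    simp only [norm_mk_singleton_mul, hy, List.head?_cons, Option.some.injEq, hs, hg,
      Nat.add_sub_cancel]
  rw [Fintype.sum_eq_add_sum_compl (y.1, !y.2), hnorm, if_pos rfl,
    Finset.sum_congr rfl fun s hs => by rw [hnorm, if_neg (by simpa using hs)]]
  simp [Finset.card_compl, mul_comm]

end FreeGroup

section SphericalPoly

variable {K : Type*} [Field K]

/-- The spherical functions of the `(q + 1)`-regular tree, as polynomials in the eigenvalue of the
adjacency operator: `sphericalPoly q n` is the value at distance `n` from the root of the radial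
eigenfunction that is `1` at the root. -/
noncomputable def sphericalPoly (q : K) : ℕ → K[X]
  | 0 => 1
  | 1 => C (q + 1)⁻¹ * X
  | n + 2 => C q⁻¹ * (X * sphericalPoly q (n + 1) - sphericalPoly q n)

theorem sum_sphericalPoly_norm_mk_singleton_mul [CharZero K] {α : Type*} [DecidableEq α]
    [Fintype α] [Nonempty α] (g : FreeGroup α) :
    ∑ s : α × Bool, sphericalPoly (2 * Fintype.card α - 1 : K) (FreeGroup.mk [s] * g).norm =
      X * sphericalPoly (2 * Fintype.card α - 1 : K) g.norm := by
  have hcard : 1 ≤ 2 * Fintype.card α := by have := Fintype.card_pos (α := α); lia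
  rcases h : g.norm with _ | n
  · obtain rfl := FreeGroup.norm_eq_zero.mp h
    rw [sum_norm_mk_singleton_mul_one]
    have hq : (2 * Fintype.card α : K) ≠ 0 := by exact_mod_cast (by lia : 2 * Fintype.card α ≠ 0)
    simp only [sphericalPoly, sub_add_cancel, nsmul_eq_mul, mul_one]
    rw [← C_eq_natCast, ← mul_assoc, ← C_mul]
    push_cast
    rw [mul_inv_cancel₀ hq, C_1, one_mul]
  · have hq : (2 * Fintype.card α - 1 : K) ≠ 0 := by
      rw [sub_ne_zero]
      exact_mod_cast (by lia : 2 * Fintype.card α ≠ 1)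
    rw [sum_norm_mk_singleton_mul_of_norm_eq_succ _ h, sphericalPoly, nsmul_eq_mul,
      ← C_eq_natCast, ← mul_assoc, ← C_mul]
    push_cast [Nat.cast_sub hcard]
    rw [mul_inv_cancel₀ hq, C_1, one_mul, add_sub_cancel]

theorem wordProd_cons {d m : ℕ} (s : Fin d × Bool) (w : Fin m → Fin d × Bool) :
    wordProd (Fin.cons s w : Fin (m + 1) → Fin d × Bool) = FreeGroup.mk [s] * wordProd w := by
  rcases s with ⟨i, _ | _⟩ <;>
    simp [wordProd, List.ofFn_succ, FreeGroup.of, FreeGroup.inv_mk, FreeGroup.invRev]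

theorem X_pow_eq_sum_sphericalPoly [CharZero K] {d : ℕ} (hd : 1 ≤ d) (m : ℕ) :
    (X : K[X]) ^ m =
      ∑ w : Fin m → Fin d × Bool, sphericalPoly (2 * d - 1 : K) (wordProd w).norm := by
  have : Nonempty (Fin d) := ⟨⟨0, hd⟩⟩
  induction m with
  | zero => simp [wordProd, sphericalPoly]
  | succ m ih =>
    calc (X : K[X]) ^ (m + 1)
        = ∑ w : Fin m → Fin d × Bool, X * sphericalPoly (2 * d - 1 : K) (wordProd w).norm := by
          rw [pow_succ', ih, Finset.mul_sum]
      _ = ∑ w : Fin m → Fin d × Bool, ∑ s : Fin d × Bool,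
            sphericalPoly (2 * d - 1 : K) (FreeGroup.mk [s] * wordProd w).norm := by
          refine Finset.sum_congr rfl fun w _ => ?_
          simpa only [Fintype.card_fin] using
            (sum_sphericalPoly_norm_mk_singleton_mul (K := K) (wordProd w)).symm
      _ = ∑ p : (Fin d × Bool) × (Fin m → Fin d × Bool),
            sphericalPoly (2 * d - 1 : K)
              (wordProd (Fin.cons p.1 p.2 : Fin (m + 1) → Fin d × Bool)).norm := by
          simp only [wordProd_cons, Fintype.sum_prod_type_right]
      _ = _ := (Fin.consEquiv fun _ => Fin d × Bool).sum_comp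
          fun w => sphericalPoly (2 * d - 1 : K) (wordProd w).norm

theorem sphericalPoly_eval_mul_eq_chebyshevS {q r : K} (hrq : r ^ 2 = q) (hr : r ≠ 0)
    (hq : q + 1 ≠ 0) (n : ℕ) (y : K) :
    (q + 1) * r ^ n * (sphericalPoly q n).eval (r * y) =
      q * (Chebyshev.S K n).eval y - (Chebyshev.S K (n - 2)).eval y := by
  have hq₀ : q ≠ 0 := hrq ▸ pow_ne_zero 2 hr
  induction n using Nat.twoStepInduction with
  | zero => simp [sphericalPoly]
  | one =>
    simp only [sphericalPoly, eval_mul, eval_C, eval_X, Nat.cast_one, Chebyshev.S_one,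
      show (1 : ℤ) - 2 = -1 by norm_num, Chebyshev.S_neg_one, eval_zero, sub_zero]
    field_simp
    rw [hrq]
  | more n ih₀ ih₁ =>
    have hS : (Chebyshev.S K n).eval y =
        y * (Chebyshev.S K (n - 1)).eval y - (Chebyshev.S K (n - 2)).eval y := by
      simp [Chebyshev.S_eq K n]
    have hn : ((n + 1 : ℕ) : ℤ) - 2 = n - 1 := by push_cast; ring
    rw [hn] at ih₁
    subst hrq
    push_cast at ih₁ ⊢
    simp only [sphericalPoly, Chebyshev.S_add_two, add_sub_cancel_right, eval_mul, eval_sub,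
      eval_C, eval_X]
    set A := (sphericalPoly (r ^ 2) (n + 1)).eval (r * y)
    set B := (sphericalPoly (r ^ 2) n).eval (r * y)
    have hpow : r ^ (n + 2) * (r ^ 2)⁻¹ = r ^ n := by rw [pow_add, mul_inv_cancel_right₀ hq₀]
    linear_combination (r ^ 2 + 1) * (r * y * A - B) * hpow + y * ih₁ - ih₀ + hS

end SphericalPoly

theorem sphericalPoly_eval_two_sqrt_mul_cos {q : ℝ} (hq : 0 < q) (n : ℕ) (θ : ℝ) :
    (q + 1) * √q ^ n * (sphericalPoly q n).eval (2 * √q * cos θ) * sin θ =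
      q * sin ((n + 1) * θ) - sin ((n - 1) * θ) := by
  have hS := sphericalPoly_eval_mul_eq_chebyshevS (sq_sqrt hq.le) (sqrt_ne_zero'.mpr hq)
    (by positivity) n (2 * cos θ)
  have hn := Chebyshev.S_two_mul_real_cos θ n
  have hn' := Chebyshev.S_two_mul_real_cos θ (n - 2)
  push_cast at hn hn'
  rw [show (n : ℝ) - 2 + 1 = n - 1 by ring] at hn'
  rw [show 2 * √q * cos θ = √q * (2 * cos θ) by ring, hS, sub_mul, mul_assoc, hn, hn']

section Orthogonality

/-- The integrand of the spherical polynomials against the Kesten–McKay law in the angular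
coordinate, up to a constant. The denominator is `|q - exp (2 i θ)| ^ 2`, which vanishes for
`q = 1` when `sin θ = 0`. -/
noncomputable def sphericalKernel (q : ℝ) (n : ℕ) (θ : ℝ) : ℝ :=
  sin θ * (q * sin ((n + 1) * θ) - sin ((n - 1) * θ)) / (q ^ 2 + 1 - 2 * q * cos (2 * θ))

theorem sq_add_one_sub_mul_cos_two_mul (q θ : ℝ) :
    q ^ 2 + 1 - 2 * q * cos (2 * θ) = (q - 1) ^ 2 + 4 * q * sin θ ^ 2 := by
  rw [cos_two_mul']
  linear_combination (-2 * q) * sin_sq_add_cos_sq θ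

theorem integral_cos_nat_mul (n : ℕ) :
    ∫ θ in 0..π, cos (n * θ) = if n = 0 then π else 0 := by
  split_ifs with h
  · simp [h]
  · rw [intervalIntegral.integral_comp_mul_left cos (Nat.cast_ne_zero.mpr h)]
    simp [sin_nat_mul_pi]

theorem integral_sin_mul_sin_succ_mul (n : ℕ) :
    ∫ θ in 0..π, sin θ * sin ((n + 1) * θ) = if n = 0 then π / 2 else 0 := by
  have hprod (θ : ℝ) :
      sin θ * sin ((n + 1) * θ) = (cos (n * θ) - cos ((n + 2 : ℕ) * θ)) / 2 := by
    rw [show n * θ = (n + 1) * θ - θ by ring,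
      show (n + 2 : ℕ) * θ = (n + 1) * θ + θ by push_cast; ring, cos_add, cos_sub]
    ring
  have hint (k : ℕ) : IntervalIntegrable (fun θ => cos (k * θ)) volume 0 π :=
    (by fun_prop : Continuous fun θ : ℝ => cos (k * θ)).intervalIntegrable 0 π
  simp only [hprod]
  rw [intervalIntegral.integral_div, intervalIntegral.integral_sub (hint n) (hint (n + 2)),
    integral_cos_nat_mul, integral_cos_nat_mul, if_neg (by lia : n + 2 ≠ 0)]
  split_ifs <;> ring

theorem abs_sphericalKernel_le_one {q : ℝ} (hq : 1 ≤ q) (n : ℕ) (θ : ℝ) :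
    |sphericalKernel q n θ| ≤ 1 := by
  set a := (n + 1) * θ
  set b := (n - 1) * θ
  set D := q ^ 2 + 1 - 2 * q * cos (2 * θ)
  have hD : D = (q * sin a - sin b) ^ 2 + (q * cos a - cos b) ^ 2 := by
    rw [show D = q ^ 2 + 1 - 2 * q * cos (a - b) by rw [show a - b = 2 * θ by ring], cos_sub]
    linear_combination (-q ^ 2) * sin_sq_add_cos_sq a - sin_sq_add_cos_sq b
  have hsin : 2 * sin θ ^ 2 ≤ D := by
    rw [show D = _ from sq_add_one_sub_mul_cos_two_mul q θ]
    nlinarith [sq_nonneg (q - 1), sq_nonneg (sin θ)]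
  -- `D = |q e ^ (i a) - e ^ (i b)| ^ 2` dominates the square of the imaginary part; apply AM-GM.
  have hnum : |sin θ * (q * sin a - sin b)| ≤ D := by
    rw [abs_le]
    constructor <;> nlinarith [sq_nonneg (q * cos a - cos b), sq_nonneg (sin θ),
      sq_nonneg (sin θ - (q * sin a - sin b)), sq_nonneg (sin θ + (q * sin a - sin b))]
  have hD₀ : 0 ≤ D := (abs_nonneg _).trans hnum
  rw [sphericalKernel, abs_div, abs_of_nonneg hD₀]
  exact div_le_one_of_le₀ hnum hD₀

theorem intervalIntegrable_sphericalKernel {q : ℝ} (hq : 1 ≤ q) (n : ℕ) (a b : ℝ) :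
    IntervalIntegrable (sphericalKernel q n) volume a b := by
  have hmeas : Measurable (sphericalKernel q n) := by
    unfold sphericalKernel
    fun_prop
  exact (intervalIntegrable_const (c := (1 : ℝ))).mono_fun hmeas.aestronglyMeasurable
    (.of_forall fun θ => by simpa using abs_sphericalKernel_le_one hq n θ)

theorem sphericalKernel_add_two {q θ : ℝ} (hq : 0 < q) (hθ : sin θ ≠ 0) (n : ℕ) :
    sphericalKernel q (n + 2) θ = q * sphericalKernel q n θ - sin θ * sin ((n + 1) * θ) := by
  have hD : q ^ 2 + 1 - 2 * q * cos (2 * θ) ≠ 0 := by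
    rw [sq_add_one_sub_mul_cos_two_mul]
    positivity
  unfold sphericalKernel
  rw [show ((n + 2 : ℕ) + 1) * θ = (n + 1) * θ + 2 * θ by push_cast; ring,
    show ((n + 2 : ℕ) - 1) * θ = (n + 1) * θ by push_cast; ring,
    show (n - 1) * θ = (n + 1) * θ - 2 * θ by ring, sin_add, sin_sub]
  generalize (n + 1) * θ = a
  generalize hDdef : q ^ 2 + 1 - 2 * q * cos (2 * θ) = D at hD ⊢
  field_simp
  rw [← hDdef]
  ring

theorem sphericalKernel_one {θ : ℝ} (hθ : sin θ ≠ 0) (n : ℕ) :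
    sphericalKernel 1 n θ = cos (n * θ) / 2 := by
  rw [sphericalKernel, sq_add_one_sub_mul_cos_two_mul, show (n + 1) * θ = n * θ + θ by ring,
    show (n - 1) * θ = n * θ - θ by ring, sin_add, sin_sub]
  field_simp
  ring

theorem integral_sphericalKernel_add_two {q : ℝ} (hq : 1 ≤ q) (n : ℕ) :
    ∫ θ in 0..π, sphericalKernel q (n + 2) θ =
      q * (∫ θ in 0..π, sphericalKernel q n θ) - if n = 0 then π / 2 else 0 := by
  rw [← integral_sin_mul_sin_succ_mul, ← intervalIntegral.integral_const_mul,
    ← intervalIntegral.integral_sub ((intervalIntegrable_sphericalKernel hq n 0 π).const_mul q)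
      (Continuous.intervalIntegrable (by fun_prop) 0 π)]
  exact intervalIntegral.integral_congr_Ioo_of_le pi_nonneg fun θ hθ =>
    sphericalKernel_add_two (by positivity) (sin_pos_of_mem_Ioo hθ).ne' n

theorem integral_sphericalKernel_eq_zero {q : ℝ} (hq : 1 ≤ q) {n : ℕ} (hn : n ≠ 0) :
    ∫ θ in 0..π, sphericalKernel q n θ = 0 := by
  rcases hq.eq_or_lt with rfl | hq₁
  · rw [intervalIntegral.integral_congr_Ioo_of_le pi_nonneg fun θ hθ =>
      sphericalKernel_one (sin_pos_of_mem_Ioo hθ).ne' n,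
      intervalIntegral.integral_div, integral_cos_nat_mul, if_neg hn, zero_div]
  · have hgeom (k : ℕ) : ∫ θ in 0..π, sphericalKernel q (n + 2 * k) θ =
        q ^ k * ∫ θ in 0..π, sphericalKernel q n θ := by
      induction k with
      | zero => simp
      | succ k ih =>
        rw [mul_add_one, ← add_assoc, integral_sphericalKernel_add_two hq, if_neg (by lia), ih]
        ring
    have hbound (k : ℕ) : |q ^ k * ∫ θ in 0..π, sphericalKernel q n θ| ≤ π := by
      rw [← hgeom]
      simpa [abs_of_pos pi_pos] using intervalIntegral.norm_integral_le_of_norm_le_const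
        (f := sphericalKernel q (n + 2 * k)) (C := 1) (a := 0) (b := π)
        fun θ _ => abs_sphericalKernel_le_one hq (n + 2 * k) θ
    by_contra hne
    have hpos := abs_pos.mpr hne
    obtain ⟨k, hk⟩ := pow_unbounded_of_one_lt (π / |∫ θ in 0..π, sphericalKernel q n θ|) hq₁
    refine (hbound k).not_gt ?_
    rwa [abs_mul, abs_of_pos (by positivity), ← div_lt_iff₀ hpos]

theorem integral_sphericalKernel {q : ℝ} (hq : 1 ≤ q) (n : ℕ) :
    ∫ θ in 0..π, sphericalKernel q n θ = if n = 0 then π / (2 * q) else 0 := by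
  split_ifs with hn
  · have h := integral_sphericalKernel_add_two hq 0
    rw [integral_sphericalKernel_eq_zero hq (by lia), if_pos rfl] at h
    subst hn
    field_simp
    linear_combination -2 * h
  · exact integral_sphericalKernel_eq_zero hq hn

/-- The density of the angle `θ ∈ (0, π)` for which `2 √q cos θ` follows the Kesten–McKay law with
parameter `q + 1`. -/
noncomputable def kestenMcKayAngularDensity (q θ : ℝ) : ℝ :=
  2 * q * (q + 1) * sin θ ^ 2 / (π * (q ^ 2 + 1 - 2 * q * cos (2 * θ)))

theorem kestenMcKayAngularDensity_mul_sphericalPoly {q : ℝ} (hq : 0 < q) (n : ℕ) (θ : ℝ) :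
    kestenMcKayAngularDensity q θ * (sphericalPoly q n).eval (2 * √q * cos θ) =
      2 * q / (π * √q ^ n) * sphericalKernel q n θ := by
  rw [sphericalKernel, ← sphericalPoly_eval_two_sqrt_mul_cos hq, kestenMcKayAngularDensity]
  field_simp

theorem integral_kestenMcKayAngularDensity_mul_sphericalPoly {q : ℝ} (hq : 1 ≤ q) (n : ℕ) :
    ∫ θ in 0..π, kestenMcKayAngularDensity q θ * (sphericalPoly q n).eval (2 * √q * cos θ) =
      if n = 0 then 1 else 0 := by
  simp only [kestenMcKayAngularDensity_mul_sphericalPoly (by positivity : 0 < q)]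
  rw [intervalIntegral.integral_const_mul, integral_sphericalKernel hq]
  split_ifs with hn
  · subst hn
    field_simp
  · rw [mul_zero]

theorem intervalIntegrable_kestenMcKayAngularDensity_mul_sphericalPoly {q : ℝ} (hq : 1 ≤ q)
    (n : ℕ) (a b : ℝ) : IntervalIntegrable
      (fun θ => kestenMcKayAngularDensity q θ * (sphericalPoly q n).eval (2 * √q * cos θ))
      volume a b := by
  simp only [kestenMcKayAngularDensity_mul_sphericalPoly (by positivity : 0 < q)]
  exact (intervalIntegrable_sphericalKernel hq n a b).const_mul _

end Orthogonality

section ChangeOfVariables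

theorem setIntegral_Ioo_neg_self_eq_integral_cos {E : Type*} [NormedAddCommGroup E]
    [NormedSpace ℝ E] {R : ℝ} (hR : 0 < R) (f : ℝ → E) :
    ∫ x in Set.Ioo (-R) R, f x = ∫ θ in 0..π, (R * sin θ) • f (R * cos θ) := by
  have himage : (fun θ => R * cos θ) '' Set.Ioo 0 π = Set.Ioo (-R) R := by
    have hcos : cos '' Set.Ioo 0 π = Set.Ioo (-1) 1 := cosPartialHomeomorph.image_source_eq_target
    rw [← Set.image_image (R * ·) cos, hcos, Set.image_mul_left_Ioo hR, mul_neg_one, mul_one]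
  have hinj : Set.InjOn (fun θ => R * cos θ) (Set.Ioo 0 π) :=
    (mul_right_injective₀ hR.ne').comp_injOn (injOn_cos.mono Set.Ioo_subset_Icc_self)
  rw [← himage, integral_image_eq_integral_abs_deriv_smul measurableSet_Ioo
      (fun θ _ => ((hasDerivAt_cos θ).const_mul R).hasDerivWithinAt) hinj,
    intervalIntegral.integral_of_le pi_nonneg, integral_Ioc_eq_integral_Ioo]
  refine setIntegral_congr_fun measurableSet_Ioo fun θ hθ => ?_
  have hsin := sin_pos_of_mem_Ioo hθ
  simp only [mul_neg, abs_neg, abs_of_pos (mul_pos hR hsin)]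

theorem kmDensity_nonneg (d : ℕ) (x : ℝ) : 0 ≤ kmDensity d x := by
  unfold kmDensity
  split_ifs with h
  · have : 0 ≤ (2 * (d : ℝ)) ^ 2 - x ^ 2 := by nlinarith [sq_nonneg (2 * (d : ℝ) - 2)]
    positivity
  · rfl

theorem measurable_kmDensity (d : ℕ) : Measurable (kmDensity d) :=
  .ite (measurableSet_le (by fun_prop) (by fun_prop)) (by fun_prop) measurable_const

theorem kmDensity_eq_zero_of_le_sq {d : ℕ} {x : ℝ} (hx : 4 * (2 * (d : ℝ) - 1) ≤ x ^ 2) :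
    kmDensity d x = 0 := by
  rw [kmDensity, sqrt_eq_zero_of_nonpos (sub_nonpos.mpr hx), mul_zero, zero_div, ite_self]

theorem mul_sin_mul_kmDensity_mul_cos {d : ℕ} {q θ : ℝ} (hq : 0 ≤ q) (hd : 2 * (d : ℝ) = q + 1)
    (hθ : 0 ≤ sin θ) :
    2 * √q * sin θ * kmDensity d (2 * √q * cos θ) = kestenMcKayAngularDensity q θ := by
  have hsqrt : √q ^ 2 = q := sq_sqrt hq
  have hrad : 4 * q - (2 * √q * cos θ) ^ 2 = (2 * √q * sin θ) ^ 2 := by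
    linear_combination (-4 * q) * sin_sq_add_cos_sq θ
      - 4 * (sin θ ^ 2 + cos θ ^ 2) * hsqrt
  have hden : (q + 1) ^ 2 - (2 * √q * cos θ) ^ 2 = q ^ 2 + 1 - 2 * q * cos (2 * θ) := by
    rw [cos_two_mul]
    linear_combination (-4 * cos θ ^ 2) * hsqrt
  have hmem : (2 * √q * cos θ) ^ 2 ≤ 4 * q := sub_nonneg.mp (hrad ▸ sq_nonneg _)
  rw [kmDensity, hd, add_sub_cancel_right, if_pos hmem, hrad, hden, sqrt_sq (by positivity),
    kestenMcKayAngularDensity]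
  field_simp
  rw [hsqrt]
  ring

theorem integral_kestenMcKay {d : ℕ} (hd : 1 ≤ d) (f : ℝ → ℝ) :
    ∫ x, f x ∂kestenMcKay d = ∫ θ in 0..π,
      kestenMcKayAngularDensity (2 * d - 1) θ * f (2 * √(2 * d - 1 : ℝ) * cos θ) := by
  have hd' : (1 : ℝ) ≤ d := by exact_mod_cast hd
  set q : ℝ := 2 * d - 1
  have hq : 2 * (d : ℝ) = q + 1 := (sub_add_cancel _ _).symm
  have hq₁ : 1 ≤ q := by linarith
  have hsupp (x : ℝ) (hx : x ∉ Set.Ioo (-(2 * √q)) (2 * √q)) : kmDensity d x * f x = 0 := by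
    rw [kmDensity_eq_zero_of_le_sq, zero_mul]
    rw [Set.mem_Ioo, ← abs_lt, not_lt] at hx
    calc 4 * q = (2 * √q) ^ 2 := by rw [mul_pow, sq_sqrt (by positivity)]; norm_num
      _ ≤ |x| ^ 2 := by gcongr
      _ = x ^ 2 := sq_abs x
  calc ∫ x, f x ∂kestenMcKay d
      = ∫ x, kmDensity d x * f x := by
        rw [kestenMcKay, integral_withDensity_eq_integral_toReal_smul
          (measurable_kmDensity d).ennreal_ofReal (by simp)]
        simp only [ENNReal.toReal_ofReal (kmDensity_nonneg d _), smul_eq_mul]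
    _ = ∫ x in Set.Ioo (-(2 * √q)) (2 * √q), kmDensity d x * f x :=
        (setIntegral_eq_integral_of_forall_compl_eq_zero hsupp).symm
    _ = ∫ θ in 0..π, 2 * √q * sin θ * (kmDensity d (2 * √q * cos θ) * f (2 * √q * cos θ)) :=
        setIntegral_Ioo_neg_self_eq_integral_cos (by positivity) _
    _ = _ := intervalIntegral.integral_congr_Ioo_of_le pi_nonneg fun θ hθ => by
        simp only [← mul_assoc, mul_sin_mul_kmDensity_mul_cos (by positivity : 0 ≤ q) hq
          (sin_pos_of_mem_Ioo hθ).le]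

theorem integral_sum_sphericalPoly_kestenMcKay {ι : Type*} (s : Finset ι) (k : ι → ℕ) {d : ℕ}
    (hd : 1 ≤ d) :
    ∫ x, (∑ i ∈ s, sphericalPoly (2 * d - 1 : ℝ) (k i)).eval x ∂kestenMcKay d =
      (s.filter fun i => k i = 0).card := by
  have hd' : (1 : ℝ) ≤ d := by exact_mod_cast hd
  have hq : (1 : ℝ) ≤ 2 * d - 1 := by linarith
  simp only [integral_kestenMcKay hd, eval_finsetSum, Finset.mul_sum]
  rw [intervalIntegral.integral_finsetSum fun i _ =>
    intervalIntegrable_kestenMcKayAngularDensity_mul_sphericalPoly hq (k i) 0 π]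
  simp only [integral_kestenMcKayAngularDensity_mul_sphericalPoly hq, Finset.sum_boole]

end ChangeOfVariables

end

/-- For every d ≥ 1 and m ≥ 0, the m-th moment of the Kesten–McKay law with
parameter 2d equals N(d, m), the number of trivial words of length m in d letters. -/
theorem stmt6 (d : ℕ) (hd : 1 ≤ d) (m : ℕ) :
    ∫ x, x ^ m ∂(kestenMcKay d) = (Ntriv d m : ℝ) := by
  calc ∫ x, x ^ m ∂kestenMcKay d
      = ∫ x, (∑ w : Fin m → Fin d × Bool,
          sphericalPoly (2 * d - 1 : ℝ) (wordProd w).norm).eval x ∂kestenMcKay d := by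
        simp only [← X_pow_eq_sum_sphericalPoly hd, Polynomial.eval_pow, Polynomial.eval_X]
    _ = (Finset.univ.filter fun w : Fin m → Fin d × Bool => (wordProd w).norm = 0).card :=
        integral_sum_sphericalPoly_kestenMcKay _ _ hd
    _ = Ntriv d m := by
        simp only [FreeGroup.norm_eq_zero, Ntriv, Nat.card_eq_fintype_card, Fintype.card_subtype]
end

section
/- Fix an integer d ≥ 2. Let p be a prime, set M = ⌊(1/2)·log_{2d−1}(p)⌋, and let F ⊆ (SL₂(ℤ/pℤ))^d be the set of all tuples S = (g₁, …, g_d) such that no nontrivial word of length at most M evaluates at S to id or −id; assume F is nonempty. Let π be a nontrivial irreducible unitary representation of SL₂(ℤ/pℤ) of dimension d(π). Then for every integer m with 1 ≤ m ≤ M, (1/|F|)·Σ_{S ∈ F} ((1/d(π))·tr(A_{π,S}^m) − N(d, m))² ≤ 2·(2d)^{2m}·|SL₂(ℤ/pℤ)| / ((p² − 1)·d(π)²). -/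
open MeasureTheory

/-!
The averaged bound already holds at each tuple `S`. Expanding `A_{π,S} ^ m` over words, the trivial
words contribute `N(d, m) · d(π)` to the trace, and by Cauchy–Schwarz the others contribute at most
`(2d) ^ m` times the largest `|χ_π(c)|` over the remaining word values `c`, none of which is
central. Since `∑_g |χ_π(g)|² = |G|`, summing over the conjugacy class of `c` alone gives
`|χ_π(c)|² ≤ |C_G(c)|`. A matrix commuting with a non-scalar `2 × 2` matrix `c` has the form
`x + y c`, and for each `y` the equation `det (x + y c) = 1` is a monic quadratic in `x`; hence
`|C_G(c)| ≤ 2q = 2 |SL₂| / (q² - 1)`.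
-/

open scoped MatrixGroups

section Conjugacy

variable {G : Type*} [Group G]

theorem ncard_conjugatesOf_mul_card_centralizer (c : G) :
    (conjugatesOf c).ncard * Nat.card (Subgroup.centralizer {c}) = Nat.card G := by
  have horbit : MulAction.orbit (ConjAct G) c = conjugatesOf c := by
    ext g
    rw [ConjAct.mem_orbit_conjAct, isConj_comm]
    rfl
  rw [← horbit, Subgroup.nat_card_centralizer_nat_card_stabilizer, ← MulAction.index_stabilizer]
  exact Subgroup.index_mul_card _

theorem card_mul_le_card_centralizer_mul_sum [Fintype G] {R : Type*} [Semiring R]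
    [PartialOrder R] [IsOrderedRing R] {f : G → R} (hf : ∀ g, 0 ≤ f g) (c : G)
    (hconj : ∀ g, IsConj c g → f g = f c) :
    Nat.card G * f c ≤ Nat.card (Subgroup.centralizer {c}) * ∑ g, f g := by
  classical
  let s : Finset G := {g | IsConj c g}
  have hs : (conjugatesOf c).ncard = s.card := by
    rw [← Set.ncard_coe_finset, Finset.coe_filter_univ]
    rfl
  have hsum : s.card * f c ≤ ∑ g, f g := by
    rw [← nsmul_eq_mul, ← Finset.sum_const,
      ← Finset.sum_congr rfl fun g hg => hconj g (Finset.mem_filter.1 hg).2]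
    exact Finset.sum_le_univ_sum_of_nonneg hf
  rw [← ncard_conjugatesOf_mul_card_centralizer c, hs, mul_comm s.card, Nat.cast_mul, mul_assoc]
  gcongr

end Conjugacy

section Character

variable {G : Type*} [Group G] {n : ℕ} (π : G →* Matrix.unitaryGroup (Fin n) ℂ)

/-- The complex representation on `Fin n → ℂ` given by the matrices `π g`; it makes the character
theory of `Representation` available for the matrix-valued `π`. -/
def underlyingRep : Representation ℂ G (Fin n → ℂ) :=
  (Matrix.toLinAlgEquiv' (R := ℂ) (n := Fin n) : _ →* _).comp
    ((Matrix.unitaryGroup (Fin n) ℂ).subtype.comp π)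

theorem character_underlyingRep (g : G) :
    (underlyingRep π).character g = (π g : Matrix (Fin n) (Fin n) ℂ).trace :=
  Matrix.trace_toLin'_eq _

theorem character_underlyingRep_inv (g : G) :
    (underlyingRep π).character g⁻¹ = star ((underlyingRep π).character g) := by
  simp only [character_underlyingRep, map_inv, Matrix.UnitaryGroup.inv_val,
    Matrix.star_eq_conjTranspose, Matrix.trace_conjTranspose]

variable {π}

theorem IsIrreducibleRep.isIrreducible_underlyingRep [NeZero n] (hirr : IsIrreducibleRep π) :
    (underlyingRep π).IsIrreducible where
  exists_pair_ne := ⟨⊥, ⊤, fun h => bot_ne_top (congrArg Subrepresentation.toSubmodule h)⟩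
  eq_bot_or_eq_top W :=
    (hirr W.toSubmodule fun g _ hv => W.apply_mem_toSubmodule g hv).imp
      (fun h => Subrepresentation.toSubmodule_injective h)
      (fun h => Subrepresentation.toSubmodule_injective h)

theorem IsIrreducibleRep.sum_norm_character_sq [Fintype G] [NeZero n] (hirr : IsIrreducibleRep π) :
    ∑ g, ‖(underlyingRep π).character g‖ ^ 2 = Nat.card G := by
  have := hirr.isIrreducible_underlyingRep
  have hcard : (Nat.card G : ℂ) ≠ 0 := Nat.cast_ne_zero.2 Nat.card_pos.ne'
  have := invertibleOfNonzero hcard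
  have horth := Representation.card_inv_mul_sum_char_mul_char_eq_finrank
    (underlyingRep π) (underlyingRep π)
  rw [Representation.IsIrreducible.finrank_intertwiningMap_self, Nat.cast_one,
    inv_mul_eq_one₀ hcard] at horth
  rw [← Complex.ofReal_inj, Complex.ofReal_natCast, horth, Complex.ofReal_sum]
  refine Finset.sum_congr rfl fun g _ => ?_
  rw [character_underlyingRep_inv, Complex.ofReal_pow]
  exact (Complex.mul_conj' _).symm

theorem IsIrreducibleRep.norm_trace_sq_le_card_centralizer [Finite G] [NeZero n]
    (hirr : IsIrreducibleRep π) (c : G) :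
    ‖(π c : Matrix (Fin n) (Fin n) ℂ).trace‖ ^ 2 ≤ Nat.card (Subgroup.centralizer {c}) := by
  have := Fintype.ofFinite G
  rw [← character_underlyingRep]
  have hclass := card_mul_le_card_centralizer_mul_sum
    (f := fun g => ‖(underlyingRep π).character g‖ ^ 2) (fun g => by positivity) c
    fun g hg => by
      obtain ⟨h, rfl⟩ := isConj_iff.1 hg
      rw [Representation.char_conj]
  rw [hirr.sum_norm_character_sq, mul_comm] at hclass
  exact le_of_mul_le_mul_right hclass (Nat.cast_pos.2 Nat.card_pos)

end Character

section SpecialLinearGroup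

theorem ncard_quadratic_roots_le {R : Type*} [CommRing R] [IsDomain R] (b c : R) :
    {x : R | x ^ 2 + b * x + c = 0}.ncard ≤ 2 := by
  let P : Polynomial R := .X ^ 2 + .C b * .X + .C c
  have hdeg : P.natDegree = 2 := by simp only [P]; compute_degree!
  have hP : P ≠ 0 := Polynomial.ne_zero_of_natDegree_gt (hdeg ▸ zero_lt_two)
  have hroots : {x : R | x ^ 2 + b * x + c = 0} = P.rootSet R := by
    ext x
    simp [Polynomial.mem_rootSet, hP, P]
  rw [hroots, ← hdeg]
  exact P.ncard_rootSet_le R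

theorem exists_eq_scalar_add_smul_of_commute {K : Type*} [Field K] {A B : Matrix (Fin 2) (Fin 2) K}
    (hA : A ∉ Set.range (Matrix.scalar (Fin 2))) (hAB : Commute A B) :
    ∃ x y : K, B = Matrix.scalar (Fin 2) x + y • A := by
  have hentry (i j : Fin 2) : A i 0 * B 0 j + A i 1 * B 1 j = B i 0 * A 0 j + B i 1 * A 1 j := by
    simpa only [Matrix.mul_apply, Fin.sum_univ_two] using congrFun₂ hAB.eq i j
  have h00 := hentry 0 0
  have h01 := hentry 0 1
  have h10 := hentry 1 0
  suffices h : ∃ y, B 0 1 = y * A 0 1 ∧ B 1 0 = y * A 1 0 ∧ B 0 0 - B 1 1 = y * (A 0 0 - A 1 1) by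
    obtain ⟨y, hy01, hy10, hyd⟩ := h
    refine ⟨B 0 0 - y * A 0 0, y, ?_⟩
    simp only [← Matrix.ext_iff, Fin.forall_fin_two, Matrix.add_apply, Matrix.smul_apply,
      Matrix.scalar_apply, Matrix.diagonal_apply, smul_eq_mul]
    grind
  by_cases hA01 : A 0 1 = 0
  · by_cases hA10 : A 1 0 = 0
    · have hdiag : A 0 0 - A 1 1 ≠ 0 := by
        refine fun hdiag => hA ⟨A 0 0, ?_⟩
        simp only [← Matrix.ext_iff, Fin.forall_fin_two, Matrix.scalar_apply,
          Matrix.diagonal_apply]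
        grind
      exact ⟨(B 0 0 - B 1 1) / (A 0 0 - A 1 1), by grind, by grind, by grind⟩
    · exact ⟨B 1 0 / A 1 0, by grind, by grind, by grind⟩
  · exact ⟨B 0 1 / A 0 1, by grind, by grind, by grind⟩

theorem mem_center_SL_iff_mem_range_scalar {R ι : Type*} [CommRing R] [Fintype ι] [DecidableEq ι]
    {c : Matrix.SpecialLinearGroup ι R} :
    c ∈ Subgroup.center (Matrix.SpecialLinearGroup ι R) ↔
      (c : Matrix ι ι R) ∈ Set.range (Matrix.scalar ι) := by
  rw [Matrix.SpecialLinearGroup.mem_center_iff]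
  refine exists_congr fun r => and_iff_right_of_imp fun hr => ?_
  have hdet := c.det_coe
  rwa [← hr, Matrix.scalar_apply, Matrix.det_diagonal, Finset.prod_const, Finset.card_univ] at hdet

theorem mem_center_SL_two_iff {R : Type*} [CommRing R] [IsDomain R] {c : SL(2, R)} :
    c ∈ Subgroup.center SL(2, R) ↔ c = 1 ∨ (c : Matrix (Fin 2) (Fin 2) R) = -1 := by
  rw [Matrix.SpecialLinearGroup.mem_center_iff]
  simp only [Fintype.card_fin, sq_eq_one_iff, or_and_right, exists_or, exists_eq_left, map_one,
    map_neg]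
  exact or_congr ⟨fun h => Subtype.ext h.symm, fun h => (congrArg Subtype.val h).symm⟩ eq_comm

theorem det_scalar_add_smul_fin_two {R : Type*} [CommRing R] (x y : R)
    (A : Matrix (Fin 2) (Fin 2) R) :
    (Matrix.scalar (Fin 2) x + y • A).det = x ^ 2 + y * A.trace * x + y ^ 2 * A.det := by
  simp only [Matrix.det_fin_two, Matrix.trace_fin_two, Matrix.add_apply, Matrix.smul_apply,
    Matrix.scalar_apply, Matrix.diagonal_apply, smul_eq_mul, zero_ne_one, one_ne_zero,
    if_true, if_false]
  ring

theorem card_centralizer_SL_two_le {K : Type*} [Field K] [Finite K] {c : SL(2, K)}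
    (hc : c ∉ Subgroup.center SL(2, K)) :
    Nat.card (Subgroup.centralizer {c}) ≤ 2 * Nat.card K := by
  have := Fintype.ofFinite K
  let A : Matrix (Fin 2) (Fin 2) K := c
  let toMatrix : SL(2, K) → Matrix (Fin 2) (Fin 2) K := fun g => g
  let roots (y : K) : Set K := {x | x ^ 2 + y * A.trace * x + (y ^ 2 * A.det - 1) = 0}
  have hcover : toMatrix '' Subgroup.centralizer {c} ⊆
      ⋃ y, (fun x => Matrix.scalar (Fin 2) x + y • A) '' roots y := by
    rintro _ ⟨g, hg, rfl⟩
    have hgc : c * g = g * c := (Subgroup.mem_centralizer_singleton_iff.1 hg).symm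
    obtain ⟨x, y, hxy⟩ := exists_eq_scalar_add_smul_of_commute
      (mem_center_SL_iff_mem_range_scalar.not.1 hc) (B := toMatrix g) (congrArg toMatrix hgc)
    have hdet : (toMatrix g).det = 1 := g.det_coe
    rw [hxy, det_scalar_add_smul_fin_two] at hdet
    have hx : x ^ 2 + y * A.trace * x + (y ^ 2 * A.det - 1) = 0 := by linear_combination hdet
    exact Set.mem_iUnion.2 ⟨y, x, hx, hxy.symm⟩
  calc Nat.card (Subgroup.centralizer {c})
      = (toMatrix '' Subgroup.centralizer {c}).ncard :=
        (Set.ncard_image_of_injective _ Subtype.val_injective).symm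
    _ ≤ (⋃ y, (fun x => Matrix.scalar (Fin 2) x + y • A) '' roots y).ncard :=
        Set.ncard_le_ncard hcover (Set.toFinite _)
    _ ≤ ∑ y, ((fun x => Matrix.scalar (Fin 2) x + y • A) '' roots y).ncard :=
        Set.ncard_iUnion_le_of_fintype _
    _ ≤ ∑ _y : K, 2 := Finset.sum_le_sum fun y _ =>
        (Set.ncard_image_le (Set.toFinite _)).trans (ncard_quadratic_roots_le _ _)
    _ = 2 * Nat.card K := by
        rw [Finset.sum_const, Finset.card_univ, Nat.card_eq_fintype_card, smul_eq_mul, mul_comm]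

theorem card_SL_mul_card_units {R ι : Type*} [CommRing R] [Fintype ι] [DecidableEq ι]
    [Nonempty ι] :
    Nat.card (Matrix.SpecialLinearGroup ι R) * Nat.card Rˣ = Nat.card (GL ι R) := by
  let toGL : Matrix.SpecialLinearGroup ι R →* GL ι R := Matrix.SpecialLinearGroup.toGL
  let det : GL ι R →* Rˣ := Matrix.GeneralLinearGroup.det
  have hker : toGL.range = det.ker := by
    ext g
    refine ⟨fun ⟨s, hs⟩ => ?_, fun hg => ⟨⟨g, congrArg Units.val hg⟩, Units.ext rfl⟩⟩
    rw [← hs]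
    exact Units.ext s.det_coe
  have hcard : Nat.card (Matrix.SpecialLinearGroup ι R) = Nat.card toGL.range :=
    Nat.card_congr (MonoidHom.ofInjective Matrix.SpecialLinearGroup.toGL_injective).toEquiv
  rw [← det.ker.card_mul_index, Subgroup.index_ker,
    MonoidHom.range_eq_top.2 Matrix.GeneralLinearGroup.det_surjective, Subgroup.card_top, ← hker,
    hcard]

theorem card_SL_two (K : Type*) [Field K] [Finite K] :
    (Nat.card SL(2, K) : ℝ) = Nat.card K * ((Nat.card K : ℝ) ^ 2 - 1) := by
  have := Fintype.ofFinite K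
  have hq : 1 < Nat.card K := Finite.one_lt_card
  have hGL : Nat.card (GL (Fin 2) K) = (Nat.card K ^ 2 - 1) * (Nat.card K ^ 2 - Nat.card K) := by
    rw [Matrix.card_GL_field, Fin.prod_univ_two, Nat.card_eq_fintype_card, Fin.val_zero,
      Fin.val_one, pow_zero, pow_one]
  have hSL : (Nat.card SL(2, K) : ℝ) * (Nat.card K - 1) =
      ((Nat.card K : ℝ) ^ 2 - 1) * ((Nat.card K : ℝ) ^ 2 - Nat.card K) := by
    rw [← card_SL_mul_card_units, Nat.card_units] at hGL
    have h := congrArg (Nat.cast : ℕ → ℝ) hGL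
    rwa [Nat.cast_mul, Nat.cast_mul, Nat.cast_pred (one_pos.trans hq),
      Nat.cast_pred (pow_pos (one_pos.trans hq) 2),
      Nat.cast_sub (Nat.le_self_pow two_ne_zero _), Nat.cast_pow] at h
  refine mul_right_cancel₀ (sub_ne_zero.2 (Nat.cast_ne_one.2 hq.ne')) ?_
  linear_combination hSL

end SpecialLinearGroup

section Words

theorem sum_pow_eq_sum_prod_ofFn {R α : Type*} [Semiring R] [Fintype α] (f : α → R) (m : ℕ) :
    (∑ x, f x) ^ m = ∑ w : Fin m → α, (List.ofFn fun j => f (w j)).prod := by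
  simpa using (MultilinearMap.mkPiAlgebraFin ℕ m R).map_sum fun _ => f

variable {G : Type*} [Group G] {d m : ℕ}

theorem wordEval_eq_lift_wordProd (S : Fin d → G) (w : Fin m → Fin d × Bool) :
    wordEval S w = FreeGroup.lift S (wordProd w) := by
  rw [wordEval, wordProd, map_list_prod, List.map_ofFn]
  congr 2
  ext j
  simp [apply_ite (FreeGroup.lift S)]

variable {n : ℕ} (π : G →* Matrix.unitaryGroup (Fin n) ℂ) (S : Fin d → G)

theorem Amat_eq_sum_letters :
    Amat π S = ∑ x : Fin d × Bool,
      (π (if x.2 then S x.1 else (S x.1)⁻¹) : Matrix (Fin n) (Fin n) ℂ) := by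
  have hinv (g : G) : (π g : Matrix (Fin n) (Fin n) ℂ)⁻¹ = ↑(π g⁻¹) :=
    Matrix.inv_eq_left_inv (by rw [← Submonoid.coe_mul, ← map_mul, inv_mul_cancel]; simp)
  simp [Amat, Fintype.sum_prod_type, hinv]

theorem Amat_pow_eq_sum_wordEval (m : ℕ) :
    Amat π S ^ m =
      ∑ w : Fin m → Fin d × Bool, (π (wordEval S w) : Matrix (Fin n) (Fin n) ℂ) := by
  rw [Amat_eq_sum_letters, sum_pow_eq_sum_prod_ofFn]
  refine Finset.sum_congr rfl fun w _ => ?_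
  rw [wordEval, map_list_prod, Submonoid.coe_list_prod, List.map_ofFn, List.map_ofFn]
  rfl

open Classical in
theorem trace_Amat_pow_sub (m : ℕ) :
    (Amat π S ^ m).trace - Ntriv d m * n =
      ∑ w : Fin m → Fin d × Bool with wordProd w ≠ 1,
        (π (wordEval S w) : Matrix (Fin n) (Fin n) ℂ).trace := by
  have htriv : ∑ w : Fin m → Fin d × Bool with wordProd w = 1,
      (π (wordEval S w) : Matrix (Fin n) (Fin n) ℂ).trace = Ntriv d m * n := by
    rw [Ntriv, Nat.card_eq_fintype_card, Fintype.card_subtype, ← nsmul_eq_mul, ← Finset.sum_const]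
    refine Finset.sum_congr rfl fun w hw => ?_
    rw [wordEval_eq_lift_wordProd, (Finset.mem_filter.1 hw).2]
    simp
  rw [Amat_pow_eq_sum_wordEval, Matrix.trace_sum, ← htriv, sub_eq_iff_eq_add']
  exact (Finset.sum_filter_add_sum_filter_not _ _ _).symm

variable {π S}

theorem norm_trace_Amat_pow_sub_sq_le {C : ℝ} (hC : 0 ≤ C)
    (hS : ∀ w : Fin m → Fin d × Bool, wordProd w ≠ 1 →
      ‖(π (wordEval S w) : Matrix (Fin n) (Fin n) ℂ).trace‖ ^ 2 ≤ C) :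
    ‖(Amat π S ^ m).trace - Ntriv d m * n‖ ^ 2 ≤ (2 * d : ℝ) ^ (2 * m) * C := by
  classical
  set Q : Finset (Fin m → Fin d × Bool) := {w | wordProd w ≠ 1}
  have hQ : (Q.card : ℝ) ≤ (2 * d) ^ m := by
    have h := Q.card_le_univ
    simp only [Fintype.card_pi_const, Fintype.card_prod, Fintype.card_fin, Fintype.card_bool] at h
    rw [mul_comm 2]
    exact_mod_cast h
  rw [trace_Amat_pow_sub]
  calc ‖∑ w ∈ Q, (π (wordEval S w) : Matrix (Fin n) (Fin n) ℂ).trace‖ ^ 2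
      ≤ (∑ w ∈ Q, ‖(π (wordEval S w) : Matrix (Fin n) (Fin n) ℂ).trace‖) ^ 2 := by
        gcongr; exact norm_sum_le _ _
    _ ≤ Q.card * ∑ w ∈ Q, ‖(π (wordEval S w) : Matrix (Fin n) (Fin n) ℂ).trace‖ ^ 2 :=
        sq_sum_le_card_mul_sum_sq
    _ ≤ Q.card * (Q.card * C) := by
        gcongr
        rw [← nsmul_eq_mul]
        exact Finset.sum_le_card_nsmul _ _ _ fun w hw => hS w (Finset.mem_filter.1 hw).2
    _ ≤ (2 * d) ^ m * ((2 * d) ^ m * C) := by gcongr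
    _ = (2 * d) ^ (2 * m) * C := by ring

end Words

theorem stmt9_general {K : Type*} [Field K] [Finite K] {n : ℕ} [NeZero n]
    {π : SL(2, K) →* Matrix.unitaryGroup (Fin n) ℂ} (hirr : IsIrreducibleRep π)
    {d m : ℕ} {S : Fin d → SL(2, K)}
    (hS : ∀ w : Fin m → Fin d × Bool, wordProd w ≠ 1 →
      wordEval S w ∉ Subgroup.center SL(2, K)) :
    ((Amat π S ^ m).trace.re / n - (Ntriv d m : ℝ)) ^ 2 ≤
      2 * (2 * d : ℝ) ^ (2 * m) * Nat.card SL(2, K) /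
        (((Nat.card K : ℝ) ^ 2 - 1) * (n : ℝ) ^ 2) := by
  have hn : (n : ℝ) ≠ 0 := NeZero.ne _
  have hq : (1 : ℝ) < Nat.card K := Nat.one_lt_cast.2 Finite.one_lt_card
  have hq₀ : (Nat.card K : ℝ) ^ 2 - 1 ≠ 0 := by nlinarith
  have hnorm := norm_trace_Amat_pow_sub_sq_le (π := π) (S := S) (by positivity) fun w hw =>
    (hirr.norm_trace_sq_le_card_centralizer _).trans
      (Nat.cast_le.2 (card_centralizer_SL_two_le (hS w hw)))
  have hre : (Amat π S ^ m).trace.re / n - Ntriv d m =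
      ((Amat π S ^ m).trace - Ntriv d m * n).re / n := by
    rw [← Nat.cast_mul, Complex.sub_re, Complex.natCast_re, Nat.cast_mul, sub_div,
      mul_div_cancel_right₀ _ hn]
  calc ((Amat π S ^ m).trace.re / n - (Ntriv d m : ℝ)) ^ 2
      = |((Amat π S ^ m).trace - Ntriv d m * n).re| ^ 2 / n ^ 2 := by rw [hre, div_pow, sq_abs]
    _ ≤ ‖(Amat π S ^ m).trace - Ntriv d m * n‖ ^ 2 / n ^ 2 := by
        gcongr; exact Complex.abs_re_le_norm _
    _ ≤ (2 * d) ^ (2 * m) * (2 * Nat.card K : ℕ) / n ^ 2 := by gcongr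
    _ = _ := by rw [card_SL_two, Nat.cast_mul, Nat.cast_ofNat]; field_simp

/-- Fix d ≥ 2, p prime, M = ⌊(1/2)·log_{2d−1}(p)⌋, and F the (nonempty) set of
tuples S ∈ SL₂(ℤ/pℤ)^d such that no nontrivial word of length at most M evaluates at S to ±id.
For every nontrivial irreducible unitary representation π of dimension d(π) and every
1 ≤ m ≤ M:
(1/|F|)·Σ_{S ∈ F} ((1/d(π))·tr(A_{π,S}^m) − N(d,m))² ≤ 2·(2d)^{2m}·|SL₂(ℤ/pℤ)|/((p²−1)·d(π)²). -/
theorem stmt9 (d : ℕ) (hd : 2 ≤ d) (p : ℕ) (hp : p.Prime)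
    (M : ℕ) (hM : M = ⌊(1/2 : ℝ) * Real.logb (2 * d - 1) p⌋₊)
    (F : Finset (Fin d → SL 2 p))
    (hF : ∀ S : Fin d → SL 2 p, S ∈ F ↔
      ∀ m : ℕ, m ≤ M → ∀ w : Fin m → Fin d × Bool, wordProd w ≠ 1 →
        (wordEval S w ≠ 1 ∧ (↑(wordEval S w) : Matrix (Fin 2) (Fin 2) (ZMod p)) ≠ -1))
    (hFne : F.Nonempty)
    (dπ : ℕ) (π : SL 2 p →* Matrix.unitaryGroup (Fin dπ) ℂ)
    (hirr : IsIrreducibleRep π) (hnt : ∃ g, π g ≠ 1)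
    (m : ℕ) (hm : 1 ≤ m) (hmM : m ≤ M) :
    (1 / (F.card : ℝ)) *
        ∑ S ∈ F, ((Amat π S ^ m).trace.re / dπ - (Ntriv d m : ℝ)) ^ 2 ≤
      2 * (2 * d : ℝ) ^ (2 * m) * (Nat.card (SL 2 p) : ℝ) /
        (((p : ℝ) ^ 2 - 1) * (dπ : ℝ) ^ 2) := by
  have : Fact p.Prime := ⟨hp⟩
  have : NeZero dπ := ⟨fun h => hnt.elim fun g hg => by subst h; exact hg (Subsingleton.elim _ _)⟩
  rw [one_div_mul_eq_div, ← Finset.expect_eq_sum_div_card]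
  refine Finset.expect_le hFne fun S hS => ?_
  have hcenter (w : Fin m → Fin d × Bool) (hw : wordProd w ≠ 1) :
      wordEval S w ∉ Subgroup.center (SL 2 p) :=
    mem_center_SL_two_iff.not.2 (not_or.2 ((hF S).1 hS m hmM w hw))
  simpa only [Nat.card_zmod] using stmt9_general hirr hcenter
end
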